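/- arXiv:2602.05304 — 14 statements merged into one kernel-verified Lean document; each statement's English description precedes it below -/
import Mathlib

section
/- Fix an integer K ≥ 1 and a failure probability δ ∈ (0,1). If τ is an integer with τ ≥ (8N/3)·log(NK/δ), then with probability at least 1 − δ the following holds: for every i ∈ [N] and every k with τ ≤ k ≤ K−1, there exists j with k − τ ≤ j < k and i_j = i (i.e., every component is sampled at least once in every window of τ consecutive iterations up to horizon K, so the staleness k − τ_{i,k} of every component gradient is at most τ). -/
open Classical in
theorem bad_card (N K : ℕ) (hN : 1 ≤ N) (τ k : ℕ) (h1 : τ ≤ k) (h2 : k < K) (i : Fin N) :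
    ((Finset.univ.filter (fun ω : Fin K → Fin N =>
      ∀ j : Fin K, k - τ ≤ (j : ℕ) → (j : ℕ) < k → ω j ≠ i)).card : ℝ)
      ≤ (N : ℝ) ^ K * Real.exp (-(τ : ℝ) / N) := by
  have hN0 : (0 : ℝ) < N := by exact_mod_cast hN
  have hsub : (Finset.univ.filter (fun ω : Fin K → Fin N =>
      ∀ j : Fin K, k - τ ≤ (j : ℕ) → (j : ℕ) < k → ω j ≠ i)) ⊆
      Fintype.piFinset (fun j : Fin K => if k - τ ≤ (j : ℕ) ∧ (j : ℕ) < k then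
        Finset.univ.erase i else Finset.univ) := by
    intro ω hω
    rw [Fintype.mem_piFinset]
    intro j
    have := (Finset.mem_filter.1 hω).2 j
    split_ifs with h
    · simpa using this h.1 h.2
    · simp
  have hc := Finset.card_le_card hsub
  rw [Fintype.card_piFinset] at hc
  have hc' : ((Finset.univ.filter (fun ω : Fin K → Fin N =>
      ∀ j : Fin K, k - τ ≤ (j : ℕ) → (j : ℕ) < k → ω j ≠ i)).card : ℝ) ≤
      ∏ j : Fin K, ((N : ℝ) * (if k - τ ≤ (j : ℕ) ∧ (j : ℕ) < k then (1 - 1 / (N : ℝ)) else 1)) := by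
    refine le_trans (Nat.cast_le.2 hc) (le_of_eq ?_)
    rw [Nat.cast_prod]
    refine Finset.prod_congr rfl fun j _ => ?_
    split_ifs with h
    · rw [Finset.card_erase_of_mem (Finset.mem_univ _), Finset.card_univ, Fintype.card_fin,
        Nat.cast_sub hN]
      field_simp
      simp
    · simp
  refine hc'.trans ?_
  rw [Finset.prod_mul_distrib, Finset.prod_const, Finset.card_univ, Fintype.card_fin]
  refine mul_le_mul_of_nonneg_left ?_ (by positivity)
  rw [Fin.prod_univ_eq_prod_range
    (fun j : ℕ => if k - τ ≤ j ∧ j < k then (1 - 1 / (N : ℝ)) else 1) K,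
    Finset.prod_ite, Finset.prod_const, Finset.prod_const_one, mul_one]
  have hf : (Finset.range K).filter (fun j => k - τ ≤ j ∧ j < k) = Finset.Ico (k - τ) k := by
    ext j
    simp only [Finset.mem_filter, Finset.mem_range, Finset.mem_Ico]
    omega
  rw [hf, Nat.card_Ico, show k - (k - τ) = τ by omega]
  have hle : (1 - 1 / (N : ℝ)) ≤ Real.exp (-(1 / (N : ℝ))) := Real.one_sub_le_exp_neg _
  have h0 : 0 ≤ 1 - 1 / (N : ℝ) := by
    rw [sub_nonneg, div_le_one hN0]; exact_mod_cast hN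
  refine (pow_le_pow_left₀ h0 hle τ).trans (le_of_eq ?_)
  rw [← Real.exp_nat_mul]
  congr 1
  ring

/- STATEMENT 0 (Bounded staleness with high probability under i.i.d. uniform sampling).
The sampling sequence is modeled as `ω : Fin K → Fin N`, uniformly distributed (the i.i.d.
uniform product measure), so the probability of an event is its cardinality divided by `N ^ K`. -/
open Classical in
theorem bounded_staleness_high_prob (N K : ℕ) (hN : 1 ≤ N) (hK : 1 ≤ K)
    (δ : ℝ) (hδ0 : 0 < δ) (hδ1 : δ < 1)
    (τ : ℕ) (hτ : (8 * (N : ℝ) / 3) * Real.log ((N : ℝ) * K / δ) ≤ (τ : ℝ)) :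
    1 - δ ≤
      (Finset.univ.filter (fun ω : Fin K → Fin N =>
          ∀ i : Fin N, ∀ k : ℕ, τ ≤ k → k ≤ K - 1 →
            ∃ j : Fin K, k - τ ≤ (j : ℕ) ∧ (j : ℕ) < k ∧ ω j = i)).card / (N : ℝ) ^ K := by
  have hN1 : (1 : ℝ) ≤ N := by exact_mod_cast hN
  have hK1 : (1 : ℝ) ≤ K := by exact_mod_cast hK
  have hN0 : (0 : ℝ) < N := by linarith
  have hK0 : (0 : ℝ) < K := by linarith
  have hx : 1 ≤ (N : ℝ) * K / δ := by
    rw [le_div_iff₀ hδ0]; nlinarith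
  have hlog := Real.log_nonneg hx
  have hexp : Real.exp (-(τ : ℝ) / N) ≤ δ / (N * K) := by
    have : -(τ : ℝ) / N ≤ - Real.log ((N : ℝ) * K / δ) := by
      rw [div_le_iff₀ hN0]
      nlinarith [mul_nonneg hN0.le hlog]
    refine (Real.exp_le_exp.2 this).trans (le_of_eq ?_)
    rw [Real.exp_neg, Real.exp_log (by positivity), inv_div]
  set P : (Fin K → Fin N) → Prop := fun ω => ∀ i : Fin N, ∀ k : ℕ, τ ≤ k → k ≤ K - 1 →
            ∃ j : Fin K, k - τ ≤ (j : ℕ) ∧ (j : ℕ) < k ∧ ω j = i with hP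
  have htot := Finset.card_filter_add_card_filter_not (s := Finset.univ) P
  rw [Finset.card_univ, Fintype.card_fun, Fintype.card_fin, Fintype.card_fin] at htot
  have htot' : ((Finset.univ.filter P).card : ℝ) +
      ((Finset.univ.filter (fun ω => ¬ P ω)).card : ℝ) = (N : ℝ) ^ K := by exact_mod_cast htot
  have hbad : ((Finset.univ.filter (fun ω => ¬ P ω)).card : ℝ) ≤ δ * (N : ℝ) ^ K := by
    have hsub : Finset.univ.filter (fun ω => ¬ P ω) ⊆
        ((Finset.univ : Finset (Fin N)) ×ˢ (Finset.Ico τ K)).biUnion (fun p =>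
          Finset.univ.filter (fun ω : Fin K → Fin N =>
            ∀ j : Fin K, p.2 - τ ≤ (j : ℕ) → (j : ℕ) < p.2 → ω j ≠ p.1)) := by
      intro ω hω
      have h := (Finset.mem_filter.1 hω).2
      simp only [hP] at h
      push Not at h
      obtain ⟨i, k, h1, h2, h3⟩ := h
      refine Finset.mem_biUnion.2 ⟨(i, k), ?_, ?_⟩
      · simp only [Finset.mem_product, Finset.mem_univ, true_and, Finset.mem_Ico]
        omega
      · exact Finset.mem_filter.2 ⟨Finset.mem_univ _, h3⟩
    have h1 := (Finset.card_le_card hsub).trans Finset.card_biUnion_le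
    refine (Nat.cast_le (α := ℝ).2 h1).trans ?_
    rw [Nat.cast_sum]
    have hb : ∀ p ∈ ((Finset.univ : Finset (Fin N)) ×ˢ (Finset.Ico τ K)),
        ((Finset.univ.filter (fun ω : Fin K → Fin N =>
            ∀ j : Fin K, p.2 - τ ≤ (j : ℕ) → (j : ℕ) < p.2 → ω j ≠ p.1)).card : ℝ)
          ≤ (N : ℝ) ^ K * (δ / (N * K)) := by
      intro p hp
      simp only [Finset.mem_product, Finset.mem_univ, true_and, Finset.mem_Ico] at hp
      exact (bad_card N K hN τ p.2 hp.1 hp.2 p.1).trans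
        (mul_le_mul_of_nonneg_left hexp (by positivity))
    refine (Finset.sum_le_card_nsmul _ _ _ hb).trans ?_
    rw [Finset.card_product, Finset.card_univ, Fintype.card_fin, Nat.card_Ico, nsmul_eq_mul,
      Nat.cast_mul]
    have hs : ((K - τ : ℕ) : ℝ) ≤ K := by exact_mod_cast Nat.sub_le _ _
    calc (N : ℝ) * ((K - τ : ℕ) : ℝ) * ((N : ℝ) ^ K * (δ / (N * K)))
        ≤ (N : ℝ) * K * ((N : ℝ) ^ K * (δ / (N * K))) := by gcongr
      _ = δ * (N : ℝ) ^ K := by field_simp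
  rw [le_div_iff₀ (by positivity)]
  linarith
end

section
/- Let f : ℝ^d → ℝ be differentiable with L-Lipschitz gradient, L > 0, and suppose f attains a global minimum value f* = f(x*). For any points x, g ∈ ℝ^d and any step size α with 0 < α ≤ 1/(4L), setting x' = x − α g, one has f(x') − f* ≤ (f(x) − f*) − (α/4)·‖∇f(x)‖² + α·‖g − ∇f(x)‖². -/
/-- Approximate descent step. -/
theorem approx_descent (d : ℕ) (hd : 1 ≤ d) (L : ℝ) (hL : 0 < L)
    (f : EuclideanSpace ℝ (Fin d) → ℝ)
    (hdiff : Differentiable ℝ f)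
    (hsmooth : ∀ x y, ‖gradient f x - gradient f y‖ ≤ L * ‖x - y‖)
    (xstar : EuclideanSpace ℝ (Fin d))
    (hmin : ∀ y, f xstar ≤ f y)
    (x g : EuclideanSpace ℝ (Fin d)) (α : ℝ) (hα0 : 0 < α) (hα : α ≤ 1 / (4 * L)) :
    f (x - α • g) - f xstar ≤
      (f x - f xstar) - (α / 4) * ‖gradient f x‖ ^ 2 + α * ‖g - gradient f x‖ ^ 2 := by
  have key := Convex.norm_image_sub_le_of_norm_hasFDerivWithin_le' (𝕜 := ℝ) (f := f)
    (f' := fun z => InnerProductSpace.toDual ℝ _ (gradient f z))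
    (φ := InnerProductSpace.toDual ℝ _ (gradient f x)) (C := L * (α * ‖g‖))
    (s := Metric.closedBall x (α * ‖g‖)) (x := x) (y := x - α • g)
    (fun z _ => ((hdiff z).hasGradientAt.hasFDerivAt).hasFDerivWithinAt)
    (fun z hz => by
      rw [← map_sub, LinearIsometryEquiv.norm_map]
      refine (hsmooth z x).trans ?_
      rw [mem_closedBall_iff_norm] at hz
      gcongr)
    (convex_closedBall _ _)
    (Metric.mem_closedBall_self (by positivity))
    (by simp [mem_closedBall_iff_norm, norm_smul, abs_of_pos hα0])
  have h1 := (le_abs_self _).trans key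
  simp only [sub_sub_cancel_left, norm_neg, norm_smul, Real.norm_eq_abs, abs_of_pos hα0,
    InnerProductSpace.toDual_apply_apply, inner_neg_right, inner_smul_right] at h1
  obtain ⟨e, he⟩ : ∃ e, e = g - gradient f x := ⟨_, rfl⟩
  have hg : g = gradient f x + e := by rw [he]; abel
  rw [← he]
  have h2 : ‖g‖ ^ 2 = ‖gradient f x‖ ^ 2 + 2 * inner ℝ (gradient f x) e + ‖e‖ ^ 2 := by
    rw [hg]; exact norm_add_sq_real _ _
  have h3 : inner ℝ (gradient f x) g = ‖gradient f x‖ ^ 2 + inner ℝ (gradient f x) e := by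
    conv_lhs => rw [hg, inner_add_right, real_inner_self_eq_norm_sq]
  have h4 : 0 ≤ ‖gradient f x‖ ^ 2 + 2 * inner ℝ (gradient f x) e + ‖e‖ ^ 2 := by
    rw [← h2]; positivity
  have h5 : L * α ≤ 1 / 4 := by
    rw [le_div_iff₀ (by positivity)] at hα; linarith
  have h6 : L * (α * ‖g‖) * (α * ‖g‖) ≤ α / 4 * ‖g‖ ^ 2 := by
    have := mul_le_mul_of_nonneg_right h5 (show 0 ≤ α * ‖g‖ ^ 2 by positivity)
    linarith
  rw [h2] at h6
  rw [h3] at h1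
  have h7 := mul_nonneg hα0.le h4
  have h8 : 0 ≤ α * ‖gradient f x‖ ^ 2 := by positivity
  have h9 : 0 ≤ α * ‖e‖ ^ 2 := by positivity
  linarith
end

section
/- Fix integers τ ≥ 1 and K > τ. If the sampling sequence has staleness bounded by τ up to horizon K, then for every k with τ ≤ k ≤ K−1, the SAG gradient error e_k := g_k − ∇f(x_k) satisfies ‖e_k‖² ≤ 4 α² L² τ · U_k, where U_k := Σ_{j=1}^τ ‖g_{k−j}‖². -/
/- STATEMENT 3 (SAG gradient error bound under bounded staleness). -/
theorem sag_gradient_error (d N : ℕ) (hd : 1 ≤ d) (hN : 1 ≤ N) (L : ℝ) (hL : 0 < L)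
    (fi : Fin N → EuclideanSpace ℝ (Fin d) → ℝ)
    (hdiff : ∀ i, Differentiable ℝ (fi i))
    (hsmooth : ∀ i x y, ‖gradient (fi i) x - gradient (fi i) y‖ ≤ L * ‖x - y‖)
    (f : EuclideanSpace ℝ (Fin d) → ℝ)
    (hf : ∀ z, f z = (∑ i, fi i z) / N)
    (idx : ℕ → Fin N) (α : ℝ) (hα : 0 < α)
    (x g : ℕ → EuclideanSpace ℝ (Fin d))
    (h : Fin N → ℕ → EuclideanSpace ℝ (Fin d))
    (hx0 : x 0 = 0)
    (hh0 : ∀ i, h i 0 = 0)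
    (hhrec : ∀ i k, h i (k + 1) = if idx k = i then gradient (fi i) (x k) else h i k)
    (hg : ∀ k, g k = (N : ℝ)⁻¹ • (∑ i, h i k)
      + (N : ℝ)⁻¹ • (gradient (fi (idx k)) (x k) - h (idx k) k))
    (hxrec : ∀ k, x (k + 1) = x k - α • g k)
    (τ K : ℕ) (hτ : 1 ≤ τ) (hK : τ < K)
    (hstale : ∀ i : Fin N, ∀ k : ℕ, τ ≤ k → k ≤ K - 1 →
      ∃ j : ℕ, k - τ ≤ j ∧ j < k ∧ idx j = i) :
    ∀ k : ℕ, τ ≤ k → k ≤ K - 1 →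
      ‖g k - gradient f (x k)‖ ^ 2 ≤
        4 * α ^ 2 * L ^ 2 * τ * ∑ j ∈ Finset.Icc 1 τ, ‖g (k - j)‖ ^ 2 := by
  intro k hk hkK
  have hN0 : (N : ℝ) ≠ 0 := by positivity
  have hNpos : (0 : ℝ) < N := by positivity
  have hstored : ∀ i m n, (∃ j, m ≤ j ∧ j < n ∧ idx j = i) →
      ∃ j, m ≤ j ∧ j < n ∧ h i n = gradient (fi i) (x j) := by
    intro i m n
    induction n with
    | zero => rintro ⟨j, _, hj, _⟩; omega
    | succ n ih =>
      rintro ⟨j, hj1, hj2, hj3⟩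
      by_cases hc : idx n = i
      · exact ⟨n, by omega, by omega, by rw [hhrec, if_pos hc]⟩
      · have hjn : j ≠ n := by rintro rfl; exact hc hj3
        obtain ⟨l, h1, h2, h3⟩ := ih ⟨j, hj1, by omega, hj3⟩
        exact ⟨l, h1, by omega, by rw [hhrec, if_neg hc, h3]⟩
  have hgk : g k = (N : ℝ)⁻¹ • ∑ i, h i (k + 1) := by
    rw [hg, ← smul_add]
    congr 1
    have h1 : ∀ i, h i (k + 1) = h i k +
        (if idx k = i then gradient (fi i) (x k) - h i k else 0) := by
      intro i
      rw [hhrec]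
      split_ifs <;> simp
    simp only [h1, Finset.sum_add_distrib, Finset.sum_ite_eq, Finset.mem_univ, if_true]
  have hgrad : gradient f (x k) = (N : ℝ)⁻¹ • ∑ i, gradient (fi i) (x k) := by
    have hfe : f = fun z => (N : ℝ)⁻¹ • ∑ i, fi i z := by
      funext z; rw [hf, smul_eq_mul]; field_simp
    have h1 : HasFDerivAt f ((N : ℝ)⁻¹ • ∑ i, fderiv ℝ (fi i) (x k)) (x k) := by
      rw [hfe]
      exact (HasFDerivAt.fun_sum fun i _ => (hdiff i (x k)).hasFDerivAt).const_smul (N : ℝ)⁻¹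
    unfold gradient
    rw [h1.fderiv, map_smulₛₗ, map_sum]
    simp
  set S := ∑ j ∈ Finset.Icc 1 τ, ‖g (k - j)‖ with hS
  have hS0 : 0 ≤ S := Finset.sum_nonneg fun _ _ => norm_nonneg _
  have hdist : ∀ n, n ≤ τ → ‖x (k - n) - x k‖ ≤ α * ∑ j ∈ Finset.Icc 1 n, ‖g (k - j)‖ := by
    intro n
    induction n with
    | zero => intro _; simp
    | succ n ih =>
      intro hn
      have h1 := ih (by omega)
      rw [Finset.sum_Icc_succ_top (by omega), mul_add]
      have h2 : x (k - (n + 1)) = x (k - n) + α • g (k - (n + 1)) := by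
        have h3 := hxrec (k - (n + 1))
        rw [show k - (n + 1) + 1 = k - n by omega] at h3
        rw [h3]; abel
      calc ‖x (k - (n + 1)) - x k‖ = ‖(x (k - n) - x k) + α • g (k - (n + 1))‖ := by
            rw [h2]; congr 1; abel
        _ ≤ ‖x (k - n) - x k‖ + ‖α • g (k - (n + 1))‖ := norm_add_le _ _
        _ ≤ _ := by
            rw [norm_smul, Real.norm_of_nonneg hα.le]; linarith
  have hterm : ∀ i, ‖h i (k + 1) - gradient (fi i) (x k)‖ ≤ L * (α * S) := by
    intro i
    obtain ⟨j0, a1, a2, a3⟩ := hstale i k hk hkK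
    obtain ⟨j, b1, b2, b3⟩ := hstored i (k - τ) (k + 1) ⟨j0, a1, by omega, a3⟩
    rw [b3]
    refine (hsmooth i _ _).trans (mul_le_mul_of_nonneg_left ?_ hL.le)
    have h1 := hdist (k - j) (by omega)
    rw [show k - (k - j) = j by omega] at h1
    refine h1.trans (mul_le_mul_of_nonneg_left ?_ hα.le)
    exact Finset.sum_le_sum_of_subset_of_nonneg
      (Finset.Icc_subset_Icc_right (by omega)) fun _ _ _ => norm_nonneg _
  have herr : ‖g k - gradient f (x k)‖ ≤ L * (α * S) := by
    rw [hgk, hgrad, ← smul_sub, ← Finset.sum_sub_distrib, norm_smul,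
      Real.norm_of_nonneg (inv_nonneg.2 hNpos.le), inv_mul_le_iff₀ hNpos]
    refine (norm_sum_le _ _).trans ((Finset.sum_le_sum fun i _ => hterm i).trans ?_)
    simp
  have hcs : S ^ 2 ≤ τ * ∑ j ∈ Finset.Icc 1 τ, ‖g (k - j)‖ ^ 2 := by
    have := sq_sum_le_card_mul_sum_sq (s := Finset.Icc 1 τ) (f := fun j => ‖g (k - j)‖)
    simpa using this
  have hU : 0 ≤ (τ : ℝ) * ∑ j ∈ Finset.Icc 1 τ, ‖g (k - j)‖ ^ 2 := (sq_nonneg S).trans hcs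
  have hc0 : 0 ≤ α ^ 2 * L ^ 2 := by positivity
  have h1 := pow_le_pow_left₀ (norm_nonneg _) herr 2
  have h2 := mul_le_mul_of_nonneg_left hcs hc0
  have h3 := mul_nonneg hc0 hU
  calc _ ≤ _ := h1
    _ = α ^ 2 * L ^ 2 * S ^ 2 := by ring
    _ ≤ 4 * (α ^ 2 * L ^ 2 * (τ * ∑ j ∈ Finset.Icc 1 τ, ‖g (k - j)‖ ^ 2)) := by linarith
    _ = _ := by ring
end

section
/- Fix integers τ ≥ 1 and K > τ. If the sampling sequence has staleness bounded by τ up to horizon K, then for every k with τ ≤ k ≤ K−1, the SAGA gradient error e_k := g_k − ∇f(x_k) satisfies ‖e_k‖² ≤ 4 α² L² τ · U_k, where U_k := Σ_{j=1}^τ ‖g_{k−j}‖². -/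
/- STATEMENT 4 (SAGA gradient error bound under bounded staleness). -/
theorem saga_gradient_error (d N : ℕ) (hd : 1 ≤ d) (hN : 1 ≤ N) (L : ℝ) (hL : 0 < L)
    (fi : Fin N → EuclideanSpace ℝ (Fin d) → ℝ)
    (hdiff : ∀ i, Differentiable ℝ (fi i))
    (hsmooth : ∀ i x y, ‖gradient (fi i) x - gradient (fi i) y‖ ≤ L * ‖x - y‖)
    (f : EuclideanSpace ℝ (Fin d) → ℝ)
    (hf : ∀ z, f z = (∑ i, fi i z) / N)
    (idx : ℕ → Fin N) (α : ℝ) (hα : 0 < α)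
    (x g : ℕ → EuclideanSpace ℝ (Fin d))
    (h : Fin N → ℕ → EuclideanSpace ℝ (Fin d))
    (hx0 : x 0 = 0)
    (hh0 : ∀ i, h i 0 = 0)
    (hhrec : ∀ i k, h i (k + 1) = if idx k = i then gradient (fi i) (x k) else h i k)
    (hg : ∀ k, g k = (N : ℝ)⁻¹ • (∑ i, h i k)
      + (gradient (fi (idx k)) (x k) - h (idx k) k))
    (hxrec : ∀ k, x (k + 1) = x k - α • g k)
    (τ K : ℕ) (hτ : 1 ≤ τ) (hK : τ < K)
    (hstale : ∀ i : Fin N, ∀ k : ℕ, τ ≤ k → k ≤ K - 1 →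
      ∃ j : ℕ, k - τ ≤ j ∧ j < k ∧ idx j = i) :
    ∀ k : ℕ, τ ≤ k → k ≤ K - 1 →
      ‖g k - gradient f (x k)‖ ^ 2 ≤
        4 * α ^ 2 * L ^ 2 * τ * ∑ j ∈ Finset.Icc 1 τ, ‖g (k - j)‖ ^ 2 := by
  intro k hk hkK
  have hNpos : (0 : ℝ) < N := by exact_mod_cast hN
  have hgrad : gradient f (x k) = (N : ℝ)⁻¹ • ∑ i, gradient (fi i) (x k) := by
    have hfe : f = fun z => (N : ℝ)⁻¹ • ∑ i, fi i z := by
      funext z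
      rw [hf z, smul_eq_mul, div_eq_inv_mul]
    have h1 : HasFDerivAt f ((N : ℝ)⁻¹ • ∑ i, fderiv ℝ (fi i) (x k)) (x k) := by
      rw [hfe]
      exact (HasFDerivAt.fun_sum fun i _ => ((hdiff i) (x k)).hasFDerivAt).const_smul (N : ℝ)⁻¹
    unfold gradient
    rw [h1.fderiv, map_smulₛₗ, map_sum]
    simp
  have hlast : ∀ i m j, j < m → idx j = i →
      ∃ j', j ≤ j' ∧ j' < m ∧ h i m = gradient (fi i) (x j') := by
    intro i m
    induction m with
    | zero => intro j hj; omega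
    | succ m ih =>
      intro j hj hij
      by_cases hm : idx m = i
      · exact ⟨m, by omega, by omega, by rw [hhrec, if_pos hm]⟩
      · have hjm : j ≠ m := by rintro rfl; exact hm hij
        obtain ⟨j', h1, h2, h3⟩ := ih j (by omega) hij
        exact ⟨j', h1, by omega, by rw [hhrec, if_neg hm, h3]⟩
  have hdist : ∀ n, n ≤ k → ‖x k - x (k - n)‖ ≤ α * ∑ j ∈ Finset.Icc 1 n, ‖g (k - j)‖ := by
    intro n
    induction n with
    | zero => simp
    | succ n ih =>
      intro hn
      have h1 := ih (by omega)
      rw [Finset.sum_Icc_succ_top (by omega), mul_add]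
      have h2 := hxrec (k - (n + 1))
      rw [show k - (n + 1) + 1 = k - n by omega] at h2
      have h3 : x k - x (k - (n + 1)) = (x k - x (k - n)) + -(α • g (k - (n + 1))) := by
        rw [h2]; abel
      rw [h3]
      refine (norm_add_le _ _).trans ?_
      rw [norm_neg, norm_smul, Real.norm_of_nonneg hα.le]
      linarith
  set S := ∑ j ∈ Finset.Icc 1 τ, ‖g (k - j)‖ with hS
  have hS0 : 0 ≤ S := Finset.sum_nonneg fun _ _ => norm_nonneg _
  have hb : ∀ i, ‖gradient (fi i) (x k) - h i k‖ ≤ L * (α * S) := by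
    intro i
    obtain ⟨j, h1, h2, h3⟩ := hstale i k hk hkK
    obtain ⟨j', h4, h5, h6⟩ := hlast i k j h2 h3
    rw [h6]
    refine (hsmooth i _ _).trans ?_
    refine mul_le_mul_of_nonneg_left ?_ hL.le
    have h7 := hdist (k - j') (by omega)
    rw [show k - (k - j') = j' by omega] at h7
    refine h7.trans (mul_le_mul_of_nonneg_left ?_ hα.le)
    exact Finset.sum_le_sum_of_subset_of_nonneg
      (Finset.Icc_subset_Icc le_rfl (by omega)) fun _ _ _ => norm_nonneg _
  have hE : ‖g k - gradient f (x k)‖ ≤ 2 * (L * (α * S)) := by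
    have h1 : g k - gradient f (x k) = (gradient (fi (idx k)) (x k) - h (idx k) k)
        - (N : ℝ)⁻¹ • ∑ i, (gradient (fi i) (x k) - h i k) := by
      rw [hg, hgrad, Finset.sum_sub_distrib, smul_sub]; abel
    have h2 : ‖∑ i, (gradient (fi i) (x k) - h i k)‖ ≤ N * (L * (α * S)) := by
      refine (norm_sum_le_of_le _ fun i _ => hb i).trans ?_
      simp
    have h3 : ‖(N : ℝ)⁻¹ • ∑ i, (gradient (fi i) (x k) - h i k)‖ ≤ L * (α * S) := by
      rw [norm_smul, Real.norm_of_nonneg (inv_nonneg.2 hNpos.le), inv_mul_le_iff₀ hNpos]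
      exact h2
    rw [h1]
    refine (norm_sub_le _ _).trans ?_
    linarith [hb (idx k)]
  have hCS : S ^ 2 ≤ τ * ∑ j ∈ Finset.Icc 1 τ, ‖g (k - j)‖ ^ 2 := by
    have := sq_sum_le_card_mul_sum_sq (s := Finset.Icc 1 τ) (f := fun j => ‖g (k - j)‖)
    simpa using this
  calc ‖g k - gradient f (x k)‖ ^ 2 ≤ (2 * (L * (α * S))) ^ 2 :=
        pow_le_pow_left₀ (norm_nonneg _) hE 2
    _ = 4 * α ^ 2 * L ^ 2 * S ^ 2 := by ring
    _ ≤ 4 * α ^ 2 * L ^ 2 * (τ * ∑ j ∈ Finset.Icc 1 τ, ‖g (k - j)‖ ^ 2) :=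
        mul_le_mul_of_nonneg_left hCS (by positivity)
    _ = _ := by ring
end

section
/- Fix integers τ ≥ 1 and K > τ. If the sampling sequence has staleness bounded by τ up to horizon K, then for every k with τ ≤ k ≤ K−1, the SAG direction satisfies ‖g_k‖² ≤ 2‖∇f(x_k)‖² + 8 L² τ α² · U_k, where U_k := Σ_{j=1}^τ ‖g_{k−j}‖². -/
/- STATEMENT 5 (SAG direction norm bound under bounded staleness). -/
theorem sag_direction_bound (d N : ℕ) (hd : 1 ≤ d) (hN : 1 ≤ N) (L : ℝ) (hL : 0 < L)
    (fi : Fin N → EuclideanSpace ℝ (Fin d) → ℝ)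
    (hdiff : ∀ i, Differentiable ℝ (fi i))
    (hsmooth : ∀ i x y, ‖gradient (fi i) x - gradient (fi i) y‖ ≤ L * ‖x - y‖)
    (f : EuclideanSpace ℝ (Fin d) → ℝ)
    (hf : ∀ z, f z = (∑ i, fi i z) / N)
    (idx : ℕ → Fin N) (α : ℝ) (hα : 0 < α)
    (x g : ℕ → EuclideanSpace ℝ (Fin d))
    (h : Fin N → ℕ → EuclideanSpace ℝ (Fin d))
    (hx0 : x 0 = 0)
    (hh0 : ∀ i, h i 0 = 0)
    (hhrec : ∀ i k, h i (k + 1) = if idx k = i then gradient (fi i) (x k) else h i k)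
    (hg : ∀ k, g k = (N : ℝ)⁻¹ • (∑ i, h i k)
      + (N : ℝ)⁻¹ • (gradient (fi (idx k)) (x k) - h (idx k) k))
    (hxrec : ∀ k, x (k + 1) = x k - α • g k)
    (τ K : ℕ) (hτ : 1 ≤ τ) (hK : τ < K)
    (hstale : ∀ i : Fin N, ∀ k : ℕ, τ ≤ k → k ≤ K - 1 →
      ∃ j : ℕ, k - τ ≤ j ∧ j < k ∧ idx j = i) :
    ∀ k : ℕ, τ ≤ k → k ≤ K - 1 →
      ‖g k‖ ^ 2 ≤ 2 * ‖gradient f (x k)‖ ^ 2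
        + 8 * L ^ 2 * τ * α ^ 2 * ∑ j ∈ Finset.Icc 1 τ, ‖g (k - j)‖ ^ 2 := by
  have hNpos : (0:ℝ) < N := by exact_mod_cast hN
  have A : ∀ (i : Fin N) (j m : ℕ), j < m → idx j = i →
      ∃ t, j ≤ t ∧ t < m ∧ h i m = gradient (fi i) (x t) := by
    intro i j m
    induction m with
    | zero => intro hj; omega
    | succ m ih =>
      intro hj hi
      rw [hhrec]
      by_cases hc : idx m = i
      · exact ⟨m, by omega, by omega, by rw [if_pos hc]⟩
      · have hjm : j ≠ m := by
          rintro rfl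
          exact hc hi
        obtain ⟨t, h1, h2, h3⟩ := ih (by omega) hi
        exact ⟨t, h1, by omega, by rw [if_neg hc, h3]⟩
  have B : ∀ k n : ℕ, n ≤ k →
      ‖x (k - n) - x k‖ ≤ α * ∑ j ∈ Finset.Icc 1 n, ‖g (k - j)‖ := by
    intro k n
    induction n with
    | zero => intro _; simp
    | succ n ih =>
      intro hn
      have e : k - n = (k - (n + 1)) + 1 := by omega
      have h1 := hxrec (k - (n + 1))
      rw [← e] at h1
      have h2 : x (k - (n + 1)) - x k = (x (k - n) - x k) + α • g (k - (n + 1)) := by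
        rw [h1]; abel
      rw [h2, Finset.sum_Icc_succ_top (by omega), mul_add]
      refine (norm_add_le _ _).trans (add_le_add (ih (by omega)) ?_)
      rw [norm_smul, Real.norm_of_nonneg hα.le]
  have G : ∀ z, gradient f z = (N : ℝ)⁻¹ • ∑ i, gradient (fi i) z := by
    intro z
    apply HasGradientAt.gradient
    rw [hasGradientAt_iff_hasFDerivAt]
    have hfe : f = fun z => (N : ℝ)⁻¹ • ∑ i, fi i z := by
      funext z
      rw [hf, smul_eq_mul, div_eq_inv_mul]
    rw [hfe, map_smulₛₗ, map_sum]
    have := (HasFDerivAt.fun_sum (u := Finset.univ) (fun i _ =>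
      ((hdiff i z).hasGradientAt).hasFDerivAt)).const_smul ((N : ℝ)⁻¹)
    simp at this ⊢
    exact this
  intro k hk hkK
  set S := ∑ j ∈ Finset.Icc 1 τ, ‖g (k - j)‖ with hS
  have hS0 : 0 ≤ S := Finset.sum_nonneg fun _ _ => norm_nonneg _
  have hg' : g k = (N : ℝ)⁻¹ • ∑ i, h i (k + 1) := by
    rw [hg, ← smul_add]
    congr 1
    have : ∀ i, h i (k + 1) = h i k +
        (if idx k = i then gradient (fi i) (x k) - h i k else 0) := by
      intro i
      rw [hhrec]
      split_ifs <;> simp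
    simp only [this, Finset.sum_add_distrib]
    simp
  have C : ∀ i, ‖h i (k + 1) - gradient (fi i) (x k)‖ ≤ L * (α * S) := by
    intro i
    obtain ⟨j, hj1, hj2, hj3⟩ := hstale i k hk hkK
    obtain ⟨t, ht1, ht2, ht3⟩ := A i j (k + 1) (by omega) hj3
    rw [ht3]
    refine (hsmooth i _ _).trans (mul_le_mul_of_nonneg_left ?_ hL.le)
    have hb := B k (k - t) (by omega)
    rw [show k - (k - t) = t by omega] at hb
    refine hb.trans (mul_le_mul_of_nonneg_left ?_ hα.le)
    exact Finset.sum_le_sum_of_subset_of_nonneg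
      (Finset.Icc_subset_Icc_right (by omega)) (fun _ _ _ => norm_nonneg _)
  have D : ‖g k - gradient f (x k)‖ ≤ L * (α * S) := by
    rw [hg', G, ← smul_sub, ← Finset.sum_sub_distrib, norm_smul,
      Real.norm_of_nonneg (by positivity)]
    have : ‖∑ i, (h i (k + 1) - gradient (fi i) (x k))‖ ≤ N * (L * (α * S)) := by
      refine (norm_sum_le_of_le _ (fun i _ => C i)).trans ?_
      simp
    rw [inv_mul_le_iff₀ hNpos]
    exact this
  have E : S ^ 2 ≤ τ * ∑ j ∈ Finset.Icc 1 τ, ‖g (k - j)‖ ^ 2 := by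
    have := sq_sum_le_card_mul_sum_sq (s := Finset.Icc 1 τ) (f := fun j => ‖g (k - j)‖)
    simpa using this
  have F : ‖g k‖ ≤ ‖gradient f (x k)‖ + L * (α * S) := by
    have := norm_add_le (gradient f (x k)) (g k - gradient f (x k))
    rw [add_sub_cancel] at this
    linarith
  have F2 : ‖g k‖ ^ 2 ≤ (‖gradient f (x k)‖ + L * (α * S)) ^ 2 :=
    pow_le_pow_left₀ (norm_nonneg _) F 2
  have E2 := mul_le_mul_of_nonneg_left E (show 0 ≤ L ^ 2 * α ^ 2 by positivity)
  have E3 : 0 ≤ L ^ 2 * α ^ 2 * S ^ 2 := by positivity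
  nlinarith [sq_nonneg (‖gradient f (x k)‖ - L * (α * S))]
end

section
/- Fix integers τ ≥ 1 and K > τ + 1, and set α = 1/(16 L τ). If the sampling sequence has staleness bounded by τ up to horizon K and f is μ-strongly convex (μ > 0), then the SAG Lyapunov function satisfies V_{k+1} ≤ (1 − αμ/4)·V_k for every k with τ ≤ k ≤ K−2. -/
open scoped RealInnerProductSpace


theorem sag_aux_descent {E : Type*} [NormedAddCommGroup E] [InnerProductSpace ℝ E] [CompleteSpace E]
    (f : E → ℝ) (L : ℝ) (hd : Differentiable ℝ f)
    (hs : ∀ x y, ‖gradient f x - gradient f y‖ ≤ L * ‖x - y‖) (y v : E) :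
    f (y + v) ≤ f y + ⟪gradient f y, v⟫ + L / 2 * ‖v‖ ^ 2 := by
  let φ : ℝ → ℝ := fun t => f (y + t • v) - t * ⟪gradient f y, v⟫ - L / 2 * ‖v‖ ^ 2 * t ^ 2
  have hder : ∀ t, HasDerivAt φ (⟪gradient f (y + t • v), v⟫ - ⟪gradient f y, v⟫
      - L / 2 * ‖v‖ ^ 2 * (2 * t)) t := by
    intro t
    have h1 : HasDerivAt (fun t : ℝ => y + t • v) v t := by
      simpa using ((hasDerivAt_id t).smul_const v).const_add y
    have h2 := (hd (y + t • v)).hasGradientAt.hasFDerivAt.comp_hasDerivAt t h1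
    have h3 : HasDerivAt (fun t : ℝ => t * ⟪gradient f y, v⟫) ⟪gradient f y, v⟫ t := by
      simpa using (hasDerivAt_id t).mul_const ⟪gradient f y, v⟫
    have h4 : HasDerivAt (fun t : ℝ => L / 2 * ‖v‖ ^ 2 * t ^ 2) (L / 2 * ‖v‖ ^ 2 * (2 * t)) t := by
      simpa using (hasDerivAt_pow 2 t).const_mul (L / 2 * ‖v‖ ^ 2)
    have h5 := (h2.sub h3).sub h4
    rw [InnerProductSpace.toDual_apply_apply] at h5
    exact h5
  have hanti : AntitoneOn φ (Set.Icc 0 1) := by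
    apply antitoneOn_of_deriv_nonpos (convex_Icc 0 1)
    · exact fun t _ => (hder t).continuousAt.continuousWithinAt
    · exact fun t _ => (hder t).differentiableAt.differentiableWithinAt
    · intro t ht
      rw [interior_Icc] at ht
      rw [(hder t).deriv, ← inner_sub_left]
      have h1 := real_inner_le_norm (gradient f (y + t • v) - gradient f y) v
      have h2 := hs (y + t • v) y
      rw [add_sub_cancel_left, norm_smul, Real.norm_of_nonneg ht.1.le] at h2
      have h3 := mul_le_mul_of_nonneg_right h2 (norm_nonneg v)
      nlinarith
  have := hanti (by simp : (0:ℝ) ∈ Set.Icc (0:ℝ) 1) (by simp : (1:ℝ) ∈ Set.Icc (0:ℝ) 1) zero_le_one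
  simp only [φ, one_smul, zero_smul, add_zero] at this
  linarith

theorem sag_aux_gradient {E : Type*} [NormedAddCommGroup E] [InnerProductSpace ℝ E] [CompleteSpace E]
    (N : ℕ) (fi : Fin N → E → ℝ) (hdiff : ∀ i, Differentiable ℝ (fi i)) (f : E → ℝ)
    (hf : ∀ z, f z = (∑ i, fi i z) / N) (z : E) :
    HasGradientAt f ((N : ℝ)⁻¹ • ∑ i, gradient (fi i) z) z := by
  have h1 : HasFDerivAt (fun z => ∑ i, fi i z)
      (∑ i, InnerProductSpace.toDual ℝ E (gradient (fi i) z)) z :=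
    HasFDerivAt.fun_sum fun i _ => (hdiff i z).hasGradientAt.hasFDerivAt
  have h2 := h1.const_smul ((N : ℝ)⁻¹)
  have h3 : f = (N : ℝ)⁻¹ • (fun z => ∑ i, fi i z) := by
    funext z
    simp [hf z, div_eq_inv_mul]
  rw [hasGradientAt_iff_hasFDerivAt, h3]
  simpa [map_smul, map_sum] using h2

theorem sag_aux_avg {E : Type*} [NormedAddCommGroup E] [InnerProductSpace ℝ E]
    (N : ℕ) (hN : 1 ≤ N) (a b : Fin N → E) (C : ℝ) (hab : ∀ i, ‖a i - b i‖ ≤ C) :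
    ‖(N : ℝ)⁻¹ • ∑ i, a i - (N : ℝ)⁻¹ • ∑ i, b i‖ ≤ C := by
  have hN' : (0 : ℝ) < N := by exact_mod_cast hN
  rw [← smul_sub, ← Finset.sum_sub_distrib, norm_smul, Real.norm_of_nonneg (by positivity)]
  have h1 : ‖∑ i, (a i - b i)‖ ≤ N * C := by
    refine (norm_sum_le_of_le Finset.univ (fun i _ => hab i)).trans ?_
    simp
  calc (N : ℝ)⁻¹ * ‖∑ i, (a i - b i)‖ ≤ (N : ℝ)⁻¹ * (N * C) := by gcongr
    _ = C := by field_simp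

theorem sag_aux_W (τ k : ℕ) (hτ : 1 ≤ τ) (hk : τ ≤ k) (a : ℕ → ℝ) :
    ∑ j ∈ Finset.Icc 1 τ, ((τ : ℝ) - j + 1) * a (k + 1 - j)
      = τ * a k + ∑ j ∈ Finset.Icc 1 τ, ((τ : ℝ) - j + 1) * a (k - j)
        - ∑ j ∈ Finset.Icc 1 τ, a (k - j) := by
  have key : ∀ n : ℕ, 1 ≤ n → ∑ j ∈ Finset.Icc 1 n, ((τ : ℝ) - j + 1) * a (k + 1 - j)
      = τ * a k + ∑ j ∈ Finset.Icc 1 n, ((τ : ℝ) - j) * a (k - j) - ((τ : ℝ) - n) * a (k - n) := by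
    intro n hn
    induction n, hn using Nat.le_induction with
    | base => simp
    | succ n hn ih =>
      rw [Finset.sum_Icc_succ_top (by omega), Finset.sum_Icc_succ_top (by omega), ih]
      rw [Nat.add_sub_add_right]
      push_cast
      ring
  rw [key τ hτ, add_sub_assoc, add_sub_assoc, ← Finset.sum_sub_distrib]
  simp only [sub_self, zero_mul, sub_zero]
  congr 1
  apply Finset.sum_congr rfl
  intros
  ring

/- STATEMENT 6 (SAG one-step Lyapunov contraction, strongly convex case). -/
theorem sag_lyapunov_contraction (d N : ℕ) (hd : 1 ≤ d) (hN : 1 ≤ N)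
    (L μ : ℝ) (hL : 0 < L) (hμ : 0 < μ)
    (fi : Fin N → EuclideanSpace ℝ (Fin d) → ℝ)
    (hdiff : ∀ i, Differentiable ℝ (fi i))
    (hsmooth : ∀ i x y, ‖gradient (fi i) x - gradient (fi i) y‖ ≤ L * ‖x - y‖)
    (f : EuclideanSpace ℝ (Fin d) → ℝ)
    (hf : ∀ z, f z = (∑ i, fi i z) / N)
    (hsc : ∀ y z, f y + ⟪gradient f y, z - y⟫ + μ / 2 * ‖z - y‖ ^ 2 ≤ f z)
    (xstar : EuclideanSpace ℝ (Fin d)) (hmin : ∀ y, f xstar ≤ f y)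
    (τ K : ℕ) (hτ : 1 ≤ τ) (hK : τ + 1 < K)
    (idx : ℕ → Fin N) (α : ℝ) (hα : α = 1 / (16 * L * τ))
    (x g : ℕ → EuclideanSpace ℝ (Fin d))
    (h : Fin N → ℕ → EuclideanSpace ℝ (Fin d))
    (hx0 : x 0 = 0)
    (hh0 : ∀ i, h i 0 = 0)
    (hhrec : ∀ i k, h i (k + 1) = if idx k = i then gradient (fi i) (x k) else h i k)
    (hg : ∀ k, g k = (N : ℝ)⁻¹ • (∑ i, h i k)
      + (N : ℝ)⁻¹ • (gradient (fi (idx k)) (x k) - h (idx k) k))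
    (hxrec : ∀ k, x (k + 1) = x k - α • g k)
    (hstale : ∀ i : Fin N, ∀ k : ℕ, τ ≤ k → k ≤ K - 1 →
      ∃ j : ℕ, k - τ ≤ j ∧ j < k ∧ idx j = i)
    (V : ℕ → ℝ)
    (hV : ∀ k, V k = f (x k) - f xstar
      + L * α ^ 2 * ∑ j ∈ Finset.Icc 1 τ, ((τ : ℝ) - j + 1) * ‖g (k - j)‖ ^ 2) :
    ∀ k : ℕ, τ ≤ k → k ≤ K - 2 → V (k + 1) ≤ (1 - α * μ / 4) * V k := by
  intro k hk hkK
  have hN' : (0 : ℝ) < N := by exact_mod_cast hN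
  have hτ' : (1 : ℝ) ≤ τ := by exact_mod_cast hτ
  have hα0 : 0 < α := by rw [hα]; positivity
  have hαL : L * α * τ = 1 / 16 := by rw [hα]; field_simp
  have hgr : ∀ z, gradient f z = (N : ℝ)⁻¹ • ∑ i, gradient (fi i) z := fun z =>
    (sag_aux_gradient N fi hdiff f hf z).gradient
  have hfd : Differentiable ℝ f := fun z =>
    (sag_aux_gradient N fi hdiff f hf z).hasFDerivAt.differentiableAt
  have hfs : ∀ y z, ‖gradient f y - gradient f z‖ ≤ L * ‖y - z‖ := by
    intro y z
    rw [hgr, hgr]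
    exact sag_aux_avg N hN _ _ _ fun i => hsmooth i y z
  have hdesc := sag_aux_descent f L hfd hfs
  have hμL : μ ≤ L := by
    let v : EuclideanSpace ℝ (Fin d) := EuclideanSpace.single ⟨0, hd⟩ 1
    have hv : ‖v‖ = 1 := by simp [v]
    have h1 := hdesc 0 v
    have h2 := hsc 0 v
    rw [zero_add] at h1
    rw [sub_zero] at h2
    rw [hv] at h1 h2
    linarith
  have hlast : ∀ i m j, j < m → idx j = i →
      ∃ s, j ≤ s ∧ s < m ∧ h i m = gradient (fi i) (x s) := by
    intro i m
    induction m with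
    | zero => intro j hj; omega
    | succ m ih =>
      intro j hj hij
      by_cases hm : idx m = i
      · exact ⟨m, by omega, by omega, by rw [hhrec, if_pos hm]⟩
      · have hjm : j ≠ m := fun e => hm (e ▸ hij)
        obtain ⟨s, h1, h2, h3⟩ := ih j (by omega) hij
        exact ⟨s, h1, by omega, by rw [hhrec, if_neg hm, h3]⟩
  have hgk : g k = (N : ℝ)⁻¹ • ∑ i, h i (k + 1) := by
    rw [hg, ← smul_add]
    congr 1
    have : ∀ i, h i (k + 1) = h i k + if idx k = i then gradient (fi i) (x k) - h i k else 0 := by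
      intro i
      rw [hhrec]
      split_ifs <;> simp
    simp only [this, Finset.sum_add_distrib]
    simp
  have hdist : ∀ n, n ≤ k → ‖x k - x (k - n)‖ ≤ α * ∑ j ∈ Finset.Icc 1 n, ‖g (k - j)‖ := by
    intro n
    induction n with
    | zero => simp
    | succ n ih =>
      intro hn
      rw [Finset.sum_Icc_succ_top (by omega), mul_add]
      have e : x (k - n) = x (k - (n + 1)) - α • g (k - (n + 1)) := by
        rw [← hxrec]; congr 1; omega
      have e2 : x k - x (k - (n + 1)) = (x k - x (k - n)) - α • g (k - (n + 1)) := by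
        rw [e]; abel
      rw [e2]
      refine (norm_sub_le _ _).trans ?_
      rw [norm_smul, Real.norm_of_nonneg hα0.le]
      linarith [ih (by omega)]
  set T := ∑ j ∈ Finset.Icc 1 τ, ‖g (k - j)‖ with hT
  set S := ∑ j ∈ Finset.Icc 1 τ, ‖g (k - j)‖ ^ 2 with hS
  set W := ∑ j ∈ Finset.Icc 1 τ, ((τ : ℝ) - j + 1) * ‖g (k - j)‖ ^ 2 with hW
  have hTS : T ^ 2 ≤ τ * S := by
    have := sq_sum_le_card_mul_sum_sq (s := Finset.Icc 1 τ) (f := fun j => ‖g (k - j)‖)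
    simpa using this
  have hS0 : 0 ≤ S := Finset.sum_nonneg fun _ _ => by positivity
  have hT0 : 0 ≤ T := Finset.sum_nonneg fun _ _ => by positivity
  have hWS : W ≤ τ * S := by
    rw [hW, hS, Finset.mul_sum]
    apply Finset.sum_le_sum
    intro j hj
    have : (1 : ℝ) ≤ j := by exact_mod_cast (Finset.mem_Icc.1 hj).1
    gcongr
    linarith
  have he : ‖gradient f (x k) - g k‖ ≤ L * (α * T) := by
    rw [hgr, hgk]
    apply sag_aux_avg N hN
    intro i
    obtain ⟨j, hj1, hj2, hj3⟩ := hstale i (k + 1) (by omega) (by omega)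
    obtain ⟨s, hs1, hs2, hs3⟩ := hlast i (k + 1) j hj2 hj3
    rw [hs3]
    refine (hsmooth i _ _).trans ?_
    gcongr
    have h1 := hdist (k - s) (by omega)
    rw [Nat.sub_sub_self (by omega)] at h1
    refine h1.trans ?_
    gcongr
    apply Finset.sum_le_sum_of_subset_of_nonneg
    · exact Finset.Icc_subset_Icc_right (by omega)
    · intros; positivity
  have he2 : ‖gradient f (x k) - g k‖ ^ 2 ≤ L * α / 16 * S := by
    calc _ ≤ (L * (α * T)) ^ 2 := by gcongr
      _ = (L * α) ^ 2 * T ^ 2 := by ring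
      _ ≤ (L * α) ^ 2 * (τ * S) := by gcongr
      _ = L * α * (L * α * τ) * S := by ring
      _ = _ := by rw [hαL]; ring
  have hPL : 2 * μ * (f (x k) - f xstar) ≤ ‖gradient f (x k)‖ ^ 2 := by
    have h1 := hsc (x k) xstar
    have h2 : 0 ≤ ‖gradient f (x k) + μ • (xstar - x k)‖ ^ 2 := by positivity
    rw [norm_add_sq_real, inner_smul_right, norm_smul, Real.norm_of_nonneg hμ.le] at h2
    have h3 := mul_le_mul_of_nonneg_left h1 hμ.le
    nlinarith
  have hstep : f (x (k + 1)) ≤ f (x k) - α * ⟪gradient f (x k), g k⟫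
      + L / 2 * α ^ 2 * ‖g k‖ ^ 2 := by
    have h1 := hdesc (x k) (-(α • g k))
    rw [← sub_eq_add_neg, ← hxrec, inner_neg_right, inner_smul_right, norm_neg, norm_smul,
      Real.norm_of_nonneg hα0.le] at h1
    nlinarith
  have hin := norm_sub_sq_real (gradient f (x k)) (g k)
  have hVk : V k = f (x k) - f xstar + L * α ^ 2 * W := hV k
  have hVk1 : V (k + 1) = f (x (k + 1)) - f xstar + L * α ^ 2 * (τ * ‖g k‖ ^ 2 + W - S) := by
    rw [hV, sag_aux_W τ k hτ hk (fun m => ‖g m‖ ^ 2)]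
  have hF0 : 0 ≤ f (x k) - f xstar := sub_nonneg.2 (hmin _)
  have hLα : L * α ≤ 1 / 16 := by
    rw [← hαL]; exact le_mul_of_one_le_right (by positivity) hτ'
  rw [hVk, hVk1]
  clear_value T S W
  have ha : α * ‖gradient f (x k) - g k‖ ^ 2 ≤ L * α ^ 2 / 16 * S := by
    have := mul_le_mul_of_nonneg_left he2 hα0.le
    linarith
  have hb := mul_le_mul_of_nonneg_left hPL hα0.le
  have hc : L * α ^ 2 * (τ * ‖g k‖ ^ 2) = α / 16 * ‖g k‖ ^ 2 := by
    linear_combination α * ‖g k‖ ^ 2 * hαL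
  have hc2 : L * α ^ 2 * ‖g k‖ ^ 2 ≤ α / 16 * ‖g k‖ ^ 2 := by
    have := mul_le_mul_of_nonneg_right hLα (by positivity : 0 ≤ α * ‖g k‖ ^ 2)
    linarith
  have hαg : 0 ≤ α * ‖g k‖ ^ 2 := by positivity
  have hd1 : α * μ * W ≤ S / 16 := by
    calc α * μ * W ≤ α * μ * (τ * S) := by gcongr
      _ ≤ α * L * (τ * S) := by gcongr
      _ = S / 16 := by linear_combination S * hαL
  have hd2 : L * α ^ 2 * (α * μ * W) ≤ L * α ^ 2 * (S / 16) := by gcongr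
  have hLS : 0 ≤ L * α ^ 2 * S := by positivity
  have hμF : 0 ≤ α * μ * (f (x k) - f xstar) := by positivity
  rw [hin] at ha
  linarith
end

section
/- Fix integers τ ≥ 1 and K > τ + 1, and set α = 1/(16 L τ). If the sampling sequence has staleness bounded by τ up to horizon K and f is μ-strongly convex (μ > 0), then the SAGA Lyapunov function satisfies V_{k+1} ≤ (1 − αμ/4)·V_k for every k with τ ≤ k ≤ K−2. -/
open scoped RealInnerProductSpace

lemma saga_descent {E : Type*} [NormedAddCommGroup E] [InnerProductSpace ℝ E] [CompleteSpace E]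
    (f : E → ℝ) (L : ℝ) (hd : Differentiable ℝ f)
    (hs : ∀ x y, ‖gradient f x - gradient f y‖ ≤ L * ‖x - y‖) (x v : E) :
    f (x + v) ≤ f x + ⟪gradient f x, v⟫ + L / 2 * ‖v‖ ^ 2 := by
  have hder : ∀ t : ℝ, HasDerivAt
      (fun t : ℝ => f (x + t • v) - t * ⟪gradient f x, v⟫ - t ^ 2 * (L / 2 * ‖v‖ ^ 2))
      (⟪gradient f (x + t • v), v⟫ - 1 * ⟪gradient f x, v⟫ - (2 * t) * (L / 2 * ‖v‖ ^ 2)) t := by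
    intro t
    have h1 : HasDerivAt (fun t : ℝ => x + t • v) v t := by
      simpa using ((hasDerivAt_id t).smul_const v).const_add x
    have h2 := ((hd (x + t • v)).hasGradientAt.hasFDerivAt).comp_hasDerivAt t h1
    have h3 : HasDerivAt (fun t : ℝ => f (x + t • v)) ⟪gradient f (x + t • v), v⟫ t := h2
    have h4 := (hasDerivAt_id t).mul_const ⟪gradient f x, v⟫
    have h6 : HasDerivAt (fun t : ℝ => t ^ 2) (2 * t) t := by simpa using hasDerivAt_pow 2 t
    have h5 := h6.mul_const (L / 2 * ‖v‖ ^ 2)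
    exact (h3.sub h4).sub h5
  have hanti : AntitoneOn
      (fun t : ℝ => f (x + t • v) - t * ⟪gradient f x, v⟫ - t ^ 2 * (L / 2 * ‖v‖ ^ 2))
      (Set.Icc 0 1) := by
    apply antitoneOn_of_deriv_nonpos (convex_Icc 0 1)
    · exact fun t _ => (hder t).continuousAt.continuousWithinAt
    · exact fun t _ => (hder t).differentiableAt.differentiableWithinAt
    · intro t ht
      rw [interior_Icc] at ht
      rw [(hder t).deriv]
      have h1 : ⟪gradient f (x + t • v) - gradient f x, v⟫ ≤ L * (t * ‖v‖) * ‖v‖ := by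
        refine (real_inner_le_norm _ _).trans ?_
        have := hs (x + t • v) x
        rw [add_sub_cancel_left, norm_smul, Real.norm_eq_abs, abs_of_pos ht.1] at this
        gcongr
      rw [inner_sub_left] at h1
      nlinarith
  have := hanti (by simp) (by simp) (zero_le_one (α := ℝ))
  simp only [one_smul, zero_smul, add_zero] at this
  linarith

lemma saga_tele (a : ℕ → ℝ) (c : ℝ) (k n : ℕ) :
    ∑ j ∈ Finset.Icc 1 n, (c - j + 1) * a (k + 1 - j)
      = ∑ j ∈ Finset.Icc 1 n, (c - j) * a (k - j) + c * a k - (c - n) * a (k - n) := by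
  induction n with
  | zero => simp
  | succ n ih =>
    rw [Finset.sum_Icc_succ_top (by omega), Finset.sum_Icc_succ_top (by omega), ih]
    rw [show k + 1 - (n + 1) = k - n by omega]
    push_cast
    ring

lemma saga_dist {E : Type*} [NormedAddCommGroup E] [InnerProductSpace ℝ E]
    (x g : ℕ → E) (α : ℝ) (hα : 0 ≤ α) (hx : ∀ k, x (k + 1) = x k - α • g k) (k n : ℕ)
    (hn : n ≤ k) : ‖x (k - n) - x k‖ ≤ α * ∑ j ∈ Finset.Icc 1 n, ‖g (k - j)‖ := by
  induction n with
  | zero => simp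
  | succ n ih =>
    have ih := ih (by omega)
    rw [Finset.sum_Icc_succ_top (by omega), mul_add]
    have h1 := hx (k - (n + 1))
    rw [show k - (n + 1) + 1 = k - n by omega] at h1
    have h2 : x (k - (n + 1)) - x k = (x (k - n) - x k) + α • g (k - (n + 1)) := by
      rw [h1]; abel
    rw [h2]
    refine (norm_add_le _ _).trans ?_
    rw [norm_smul, Real.norm_eq_abs, abs_of_nonneg hα]
    linarith

lemma saga_stored {E ι : Type*} [DecidableEq ι] (G : E → E) (x : ℕ → E) (h : ℕ → E) (idx : ℕ → ι)
    (i : ι) (hrec : ∀ k, h (k + 1) = if idx k = i then G (x k) else h k) (a k : ℕ)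
    (hj : ∃ j, a ≤ j ∧ j < k ∧ idx j = i) : ∃ j, a ≤ j ∧ j < k ∧ h k = G (x j) := by
  induction k with
  | zero => obtain ⟨j, _, h2, _⟩ := hj; omega
  | succ k ih =>
    obtain ⟨j, h1, h2, h3⟩ := hj
    by_cases hk : idx k = i
    · exact ⟨k, by omega, by omega, by rw [hrec, if_pos hk]⟩
    · have : j ≠ k := by rintro rfl; exact hk h3
      obtain ⟨j', h4, h5, h6⟩ := ih ⟨j, h1, by omega, h3⟩
      exact ⟨j', h4, by omega, by rw [hrec, if_neg hk, h6]⟩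

/- STATEMENT 7 (SAGA one-step Lyapunov contraction, strongly convex case). -/
theorem saga_lyapunov_contraction (d N : ℕ) (hd : 1 ≤ d) (hN : 1 ≤ N)
    (L μ : ℝ) (hL : 0 < L) (hμ : 0 < μ)
    (fi : Fin N → EuclideanSpace ℝ (Fin d) → ℝ)
    (hdiff : ∀ i, Differentiable ℝ (fi i))
    (hsmooth : ∀ i x y, ‖gradient (fi i) x - gradient (fi i) y‖ ≤ L * ‖x - y‖)
    (f : EuclideanSpace ℝ (Fin d) → ℝ)
    (hf : ∀ z, f z = (∑ i, fi i z) / N)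
    (hsc : ∀ y z, f y + ⟪gradient f y, z - y⟫ + μ / 2 * ‖z - y‖ ^ 2 ≤ f z)
    (xstar : EuclideanSpace ℝ (Fin d)) (hmin : ∀ y, f xstar ≤ f y)
    (τ K : ℕ) (hτ : 1 ≤ τ) (hK : τ + 1 < K)
    (idx : ℕ → Fin N) (α : ℝ) (hα : α = 1 / (16 * L * τ))
    (x g : ℕ → EuclideanSpace ℝ (Fin d))
    (h : Fin N → ℕ → EuclideanSpace ℝ (Fin d))
    (hx0 : x 0 = 0)
    (hh0 : ∀ i, h i 0 = 0)
    (hhrec : ∀ i k, h i (k + 1) = if idx k = i then gradient (fi i) (x k) else h i k)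
    (hg : ∀ k, g k = (N : ℝ)⁻¹ • (∑ i, h i k)
      + (gradient (fi (idx k)) (x k) - h (idx k) k))
    (hxrec : ∀ k, x (k + 1) = x k - α • g k)
    (hstale : ∀ i : Fin N, ∀ k : ℕ, τ ≤ k → k ≤ K - 1 →
      ∃ j : ℕ, k - τ ≤ j ∧ j < k ∧ idx j = i)
    (V : ℕ → ℝ)
    (hV : ∀ k, V k = f (x k) - f xstar
      + L * α ^ 2 * ∑ j ∈ Finset.Icc 1 τ, ((τ : ℝ) - j + 1) * ‖g (k - j)‖ ^ 2) :
    ∀ k : ℕ, τ ≤ k → k ≤ K - 2 → V (k + 1) ≤ (1 - α * μ / 4) * V k := by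
  intro k hk hkK
  have hNpos : (0 : ℝ) < N := by exact_mod_cast hN
  have hτR : (1 : ℝ) ≤ τ := by exact_mod_cast hτ
  have hαpos : 0 < α := by rw [hα]; positivity
  have hαL : L * α * τ = 1 / 16 := by rw [hα]; field_simp
  have hgradf : ∀ z, HasGradientAt f ((N : ℝ)⁻¹ • ∑ i, gradient (fi i) z) z := by
    intro z
    have h1 : HasFDerivAt (fun z => ∑ i, fi i z)
        (∑ i, (InnerProductSpace.toDual ℝ _) (gradient (fi i) z)) z :=
      HasFDerivAt.fun_sum fun i _ => (hdiff i z).hasGradientAt.hasFDerivAt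
    have h2 := h1.const_smul (N : ℝ)⁻¹
    rw [hasGradientAt_iff_hasFDerivAt]
    have hfe : f = fun z => (N : ℝ)⁻¹ • ∑ i, fi i z := by
      funext z; rw [hf, smul_eq_mul, div_eq_inv_mul]
    rw [hfe, map_smul, map_sum]
    exact h2
  have hgf : ∀ z, gradient f z = (N : ℝ)⁻¹ • ∑ i, gradient (fi i) z := fun z => (hgradf z).gradient
  have hfd : Differentiable ℝ f := fun z => (hgradf z).hasFDerivAt.differentiableAt
  -- averages
  have havg : ∀ (u : Fin N → EuclideanSpace ℝ (Fin d)) (c : ℝ), (∀ i, ‖u i‖ ≤ c) →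
      ‖(N : ℝ)⁻¹ • ∑ i, u i‖ ≤ c := by
    intro u c hu
    rw [norm_smul, norm_inv, Real.norm_natCast, inv_mul_le_iff₀ hNpos]
    refine (norm_sum_le _ _).trans ?_
    refine (Finset.sum_le_sum fun i _ => hu i).trans ?_
    simp
  have hsf : ∀ y z, ‖gradient f y - gradient f z‖ ≤ L * ‖y - z‖ := by
    intro y z
    rw [hgf, hgf, ← smul_sub, ← Finset.sum_sub_distrib]
    exact havg _ _ fun i => hsmooth i y z
  have hμL : μ ≤ L := by
    set v : EuclideanSpace ℝ (Fin d) := EuclideanSpace.single ⟨0, hd⟩ 1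
    have hv : ‖v‖ = 1 := by simp [v]
    have h1 := hsc 0 v
    have h2 := saga_descent f L hfd hsf 0 v
    rw [zero_add] at h2
    rw [sub_zero] at h1
    rw [hv] at h1 h2
    linarith
  have hPL : 2 * μ * (f (x k) - f xstar) ≤ ‖gradient f (x k)‖ ^ 2 := by
    have h1 := hsc (x k) xstar
    have h2 := abs_le.1 (abs_real_inner_le_norm (gradient f (x k)) (xstar - x k))
    nlinarith [sq_nonneg (‖gradient f (x k)‖ - μ * ‖xstar - x k‖), h2.1]
  set S := ∑ j ∈ Finset.Icc 1 τ, ‖g (k - j)‖ with hS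
  set G := ∑ j ∈ Finset.Icc 1 τ, ‖g (k - j)‖ ^ 2 with hG
  set W := ∑ j ∈ Finset.Icc 1 τ, ((τ : ℝ) - j + 1) * ‖g (k - j)‖ ^ 2 with hW
  have hSG : S ^ 2 ≤ τ * G := by
    have := sq_sum_le_card_mul_sum_sq (s := Finset.Icc 1 τ) (f := fun j => ‖g (k - j)‖)
    simpa using this
  have hG0 : 0 ≤ G := Finset.sum_nonneg fun _ _ => by positivity
  have hS0 : 0 ≤ S := Finset.sum_nonneg fun _ _ => by positivity
  have hWG : W ≤ τ * G := by
    rw [hW, hG, Finset.mul_sum]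
    refine Finset.sum_le_sum fun j hj => ?_
    have : (1 : ℝ) ≤ j := by exact_mod_cast (Finset.mem_Icc.1 hj).1
    gcongr
    linarith
  have hWrec : ∑ j ∈ Finset.Icc 1 τ, ((τ : ℝ) - j + 1) * ‖g (k + 1 - j)‖ ^ 2
      = W - G + τ * ‖g k‖ ^ 2 := by
    rw [saga_tele (fun m => ‖g m‖ ^ 2) τ k τ, hW, hG, ← Finset.sum_sub_distrib]
    have : ∀ j : ℕ, ((τ : ℝ) - j + 1) * ‖g (k - j)‖ ^ 2 - ‖g (k - j)‖ ^ 2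
        = ((τ : ℝ) - j) * ‖g (k - j)‖ ^ 2 := fun j => by ring
    simp only [this]
    ring
  have hst : ∀ i, ‖h i k - gradient (fi i) (x k)‖ ≤ L * (α * S) := by
    intro i
    obtain ⟨j, h1, h2, h3⟩ := saga_stored (gradient (fi i)) x (h i) idx i (hhrec i) (k - τ) k
      (hstale i k hk (by omega))
    rw [h3]
    refine (hsmooth i _ _).trans ?_
    have h4 := saga_dist x g α hαpos.le hxrec k (k - j) (by omega)
    rw [show k - (k - j) = j by omega] at h4
    have h5 : ∑ m ∈ Finset.Icc 1 (k - j), ‖g (k - m)‖ ≤ S :=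
      Finset.sum_le_sum_of_subset_of_nonneg (Finset.Icc_subset_Icc_right (by omega))
        fun _ _ _ => norm_nonneg _
    have h6 := mul_le_mul_of_nonneg_left h5 hαpos.le
    exact mul_le_mul_of_nonneg_left (h4.trans h6) hL.le
  have he : ‖g k - gradient f (x k)‖ ≤ 2 * (L * (α * S)) := by
    have : g k - gradient f (x k) = (N : ℝ)⁻¹ • ∑ i, (h i k - gradient (fi i) (x k))
        - (h (idx k) k - gradient (fi (idx k)) (x k)) := by
      rw [hg, hgf, Finset.sum_sub_distrib, smul_sub]; abel
    rw [this]
    refine (norm_sub_le _ _).trans ?_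
    have := havg _ _ hst
    have := hst (idx k)
    linarith
  have he2 : ‖g k - gradient f (x k)‖ ^ 2 ≤ 4 * L ^ 2 * α ^ 2 * (τ * G) := by
    have h1 := pow_le_pow_left₀ (norm_nonneg _) he 2
    have h2 : 4 * L ^ 2 * α ^ 2 * S ^ 2 ≤ 4 * L ^ 2 * α ^ 2 * (τ * G) := by gcongr
    calc _ ≤ _ := h1
      _ = 4 * L ^ 2 * α ^ 2 * S ^ 2 := by ring
      _ ≤ _ := h2
  have hdesc : f (x (k + 1)) ≤ f (x k) - α * ⟪gradient f (x k), g k⟫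
      + L / 2 * α ^ 2 * ‖g k‖ ^ 2 := by
    have := saga_descent f L hfd hsf (x k) (-(α • g k))
    rw [← sub_eq_add_neg, ← hxrec, inner_neg_right, real_inner_smul_right, norm_neg, norm_smul,
      Real.norm_eq_abs, mul_pow, sq_abs] at this
    linarith
  have hpol := norm_sub_sq_real (g k) (gradient f (x k))
  rw [real_inner_comm] at hpol
  rw [hV, hV, hWrec, ← hW]
  set D := f (x k) - f xstar with hD
  have hD0 : 0 ≤ D := sub_nonneg.2 (hmin _)
  set q := ‖g k‖ ^ 2 with hq
  have hq0 : 0 ≤ q := by positivity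
  set p := ‖gradient f (x k)‖ ^ 2 with hp
  set e := ‖g k - gradient f (x k)‖ ^ 2 with hee
  have hinn : α * ⟪gradient f (x k), g k⟫ = α * (q + p - e) / 2 := by
    rw [hpol]; ring
  -- error term
  have t1 : α * e ≤ L * α ^ 2 * G / 4 := by
    calc α * e ≤ α * (4 * L ^ 2 * α ^ 2 * (τ * G)) := by gcongr
      _ = 4 * (L * α * τ) * (L * α ^ 2 * G) := by ring
      _ = _ := by rw [hαL]; ring
  have t2 : L * α ^ 2 * (τ * q) = α * q / 16 := by
    calc _ = (L * α * τ) * (α * q) := by ring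
      _ = _ := by rw [hαL]; ring
  have t3 : L * α ^ 2 * q ≤ α * q / 16 := by
    rw [← t2]; gcongr; nlinarith
  have t4 : α * (2 * μ * D) ≤ α * p := by gcongr
  have hW0 : 0 ≤ W := by
    refine Finset.sum_nonneg fun j hj => ?_
    have : (j : ℝ) ≤ τ := by exact_mod_cast (Finset.mem_Icc.1 hj).2
    refine mul_nonneg (by linarith) (by positivity)
  have t5 : α * μ / 4 * (L * α ^ 2 * W) ≤ L * α ^ 2 * G / 64 := by
    calc _ ≤ α * L / 4 * (L * α ^ 2 * (τ * G)) := by gcongr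
      _ = (L * α * τ) * (L * α ^ 2 * G) / 4 := by ring
      _ = _ := by rw [hαL]; ring
  clear_value W G D q p e
  have t6 : 0 ≤ L * α ^ 2 * G := by positivity
  have t7 : 0 ≤ α * q := by positivity
  have t8 : 0 ≤ α * μ * D := by positivity
  have e1 : (1 - α * μ / 4) * (D + L * α ^ 2 * W)
      = D + L * α ^ 2 * W - α * μ * D / 4 - α * μ / 4 * (L * α ^ 2 * W) := by ring
  have e2 : L * α ^ 2 * (W - G + τ * q) = L * α ^ 2 * W - L * α ^ 2 * G + L * α ^ 2 * (τ * q) := by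
    ring
  rw [e1, e2]
  rw [hinn] at hdesc
  linarith
end

section
/- Fix an integer τ ≥ 1 and set α = 1/(16 L τ). For any sampling sequence, the SAG iterates satisfy ‖x_k‖ ≤ B for every k with 0 ≤ k ≤ τ. -/
/- STATEMENT 8 (SAG bounded iterates during the burn-in period). -/
theorem sag_bounded_iterates (d N : ℕ) (hd : 1 ≤ d) (hN : 1 ≤ N) (L : ℝ) (hL : 0 < L)
    (fi : Fin N → EuclideanSpace ℝ (Fin d) → ℝ)
    (hdiff : ∀ i, Differentiable ℝ (fi i))
    (hsmooth : ∀ i x y, ‖gradient (fi i) x - gradient (fi i) y‖ ≤ L * ‖x - y‖)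
    (f : EuclideanSpace ℝ (Fin d) → ℝ)
    (hf : ∀ z, f z = (∑ i, fi i z) / N)
    (xstar : EuclideanSpace ℝ (Fin d)) (hmin : ∀ y, f xstar ≤ f y)
    (xistar : Fin N → EuclideanSpace ℝ (Fin d))
    (hxi : ∀ i y, fi i (xistar i) ≤ fi i y)
    (B : ℝ) (hB : B = max ‖xstar‖ (⨆ i, ‖xistar i‖))
    (τ : ℕ) (hτ : 1 ≤ τ)
    (idx : ℕ → Fin N) (α : ℝ) (hα : α = 1 / (16 * L * τ))
    (x g : ℕ → EuclideanSpace ℝ (Fin d))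
    (h : Fin N → ℕ → EuclideanSpace ℝ (Fin d))
    (hx0 : x 0 = 0)
    (hh0 : ∀ i, h i 0 = 0)
    (hhrec : ∀ i k, h i (k + 1) = if idx k = i then gradient (fi i) (x k) else h i k)
    (hg : ∀ k, g k = (N : ℝ)⁻¹ • (∑ i, h i k)
      + (N : ℝ)⁻¹ • (gradient (fi (idx k)) (x k) - h (idx k) k))
    (hxrec : ∀ k, x (k + 1) = x k - α • g k) :
    ∀ k : ℕ, k ≤ τ → ‖x k‖ ≤ B := by
  have hNpos : (0 : ℝ) < N := by exact_mod_cast hN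
  have hτpos : (0 : ℝ) < τ := by exact_mod_cast hτ
  have hBi : ∀ i, ‖xistar i‖ ≤ B := by
    intro i
    rw [hB]
    exact le_max_of_le_right
      (le_ciSup (f := fun i => ‖xistar i‖) (Set.finite_range _).bddAbove i)
  have hB0 : 0 ≤ B := by
    rw [hB]
    exact le_max_of_le_left (norm_nonneg _)
  have hgrad0 : ∀ i, gradient (fi i) (xistar i) = 0 := by
    intro i
    have hm : IsLocalMin (fi i) (xistar i) := Filter.Eventually.of_forall (hxi i)
    simp [gradient, hm.fderiv_eq_zero]
  have hgb : ∀ i y, ‖y‖ ≤ B → ‖gradient (fi i) y‖ ≤ 2 * L * B := by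
    intro i y hy
    have h1 := hsmooth i y (xistar i)
    rw [hgrad0, sub_zero] at h1
    have h2 : ‖y - xistar i‖ ≤ 2 * B := by
      have := norm_sub_le y (xistar i)
      have := hBi i
      linarith
    have h3 := mul_le_mul_of_nonneg_left h2 hL.le
    linarith
  have hgsum : ∀ k, g k = (N : ℝ)⁻¹ • ∑ i, h i (k + 1) := by
    intro k
    rw [hg, ← smul_add]
    congr 1
    have : ∀ i, h i (k + 1) = h i k +
        (if idx k = i then gradient (fi (idx k)) (x k) - h (idx k) k else 0) := by
      intro i
      rw [hhrec]
      split_ifs with hi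
      · subst hi
        abel
      · simp
    simp_rw [this]
    rw [Finset.sum_add_distrib]
    simp
  have hle : ∀ k : ℕ, k ≤ τ → (k : ℝ) * (B / (8 * τ)) ≤ B := by
    intro k hk
    have hk' : (k : ℝ) ≤ τ := by exact_mod_cast hk
    rw [mul_div_assoc', div_le_iff₀ (by positivity)]
    nlinarith [mul_le_mul_of_nonneg_right hk' hB0, mul_nonneg hτpos.le hB0]
  have key : ∀ k : ℕ, k ≤ τ → ‖x k‖ ≤ k * (B / (8 * τ)) ∧ ∀ i, ‖h i k‖ ≤ 2 * L * B := by
    intro k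
    induction k with
    | zero =>
      intro _
      refine ⟨by simp [hx0], fun i => ?_⟩
      rw [hh0, norm_zero]
      positivity
    | succ k ih =>
      intro hk
      obtain ⟨hxk, hhk⟩ := ih (by omega)
      have hh1 : ∀ i, ‖h i (k + 1)‖ ≤ 2 * L * B := by
        intro i
        rw [hhrec]
        split_ifs
        · exact hgb i _ (hxk.trans (hle k (by omega)))
        · exact hhk i
      refine ⟨?_, hh1⟩
      have hgk : ‖g k‖ ≤ 2 * L * B := by
        rw [hgsum, norm_smul, norm_inv, Real.norm_of_nonneg hNpos.le,
          inv_mul_le_iff₀ hNpos]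
        refine (norm_sum_le _ _).trans ((Finset.sum_le_sum fun i _ => hh1 i).trans ?_)
        simp
      have hα0 : 0 ≤ α := by rw [hα]; positivity
      have hstep : ‖α • g k‖ ≤ B / (8 * τ) := by
        rw [norm_smul, Real.norm_of_nonneg hα0]
        refine (mul_le_mul_of_nonneg_left hgk hα0).trans (le_of_eq ?_)
        rw [hα]
        field_simp
        ring
      rw [hxrec]
      refine (norm_sub_le _ _).trans ?_
      push_cast
      linarith
  intro k hk
  exact (key k hk).1.trans (hle k hk)
end

section
/- Fix an integer τ ≥ 1 and set α = 1/(16 L τ). For any sampling sequence, the SAGA iterates satisfy ‖x_k‖ ≤ B for every k with 0 ≤ k ≤ τ. -/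
/- STATEMENT 9 (SAGA bounded iterates during the burn-in period). -/
theorem saga_bounded_iterates (d N : ℕ) (hd : 1 ≤ d) (hN : 1 ≤ N) (L : ℝ) (hL : 0 < L)
    (fi : Fin N → EuclideanSpace ℝ (Fin d) → ℝ)
    (hdiff : ∀ i, Differentiable ℝ (fi i))
    (hsmooth : ∀ i x y, ‖gradient (fi i) x - gradient (fi i) y‖ ≤ L * ‖x - y‖)
    (f : EuclideanSpace ℝ (Fin d) → ℝ)
    (hf : ∀ z, f z = (∑ i, fi i z) / N)
    (xstar : EuclideanSpace ℝ (Fin d)) (hmin : ∀ y, f xstar ≤ f y)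
    (xistar : Fin N → EuclideanSpace ℝ (Fin d))
    (hxi : ∀ i y, fi i (xistar i) ≤ fi i y)
    (B : ℝ) (hB : B = max ‖xstar‖ (⨆ i, ‖xistar i‖))
    (τ : ℕ) (hτ : 1 ≤ τ)
    (idx : ℕ → Fin N) (α : ℝ) (hα : α = 1 / (16 * L * τ))
    (x g : ℕ → EuclideanSpace ℝ (Fin d))
    (h : Fin N → ℕ → EuclideanSpace ℝ (Fin d))
    (hx0 : x 0 = 0)
    (hh0 : ∀ i, h i 0 = 0)
    (hhrec : ∀ i k, h i (k + 1) = if idx k = i then gradient (fi i) (x k) else h i k)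
    (hg : ∀ k, g k = (N : ℝ)⁻¹ • (∑ i, h i k)
      + (gradient (fi (idx k)) (x k) - h (idx k) k))
    (hxrec : ∀ k, x (k + 1) = x k - α • g k) :
    ∀ k : ℕ, k ≤ τ → ‖x k‖ ≤ B := by
  have hτ' : (0:ℝ) < τ := by exact_mod_cast hτ
  have hN' : (0:ℝ) < N := by exact_mod_cast hN
  have hxB : ∀ i, ‖xistar i‖ ≤ B := by
    intro i
    rw [hB]
    exact le_max_of_le_right (le_ciSup (f := fun i => ‖xistar i‖) (Set.finite_range _).bddAbove i)
  have hB0 : 0 ≤ B := by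
    rw [hB]
    exact le_max_of_le_left (norm_nonneg _)
  have hgrad0 : ∀ i, gradient (fi i) (xistar i) = 0 := by
    intro i
    have hm : IsLocalMin (fi i) (xistar i) := Filter.Eventually.of_forall (hxi i)
    unfold gradient
    rw [hm.fderiv_eq_zero]
    simp
  have hgr : ∀ i y, ‖y‖ ≤ B → ‖gradient (fi i) y‖ ≤ 2 * L * B := by
    intro i y hy
    have h1 := hsmooth i y (xistar i)
    rw [hgrad0, sub_zero] at h1
    have h2 : ‖y - xistar i‖ ≤ 2 * B := by
      have := norm_sub_le y (xistar i)
      have := hxB i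
      linarith
    nlinarith
  have key : ∀ k : ℕ, k ≤ τ → ‖x k‖ ≤ B * k / τ ∧ ∀ i, ‖h i k‖ ≤ 2 * L * B := by
    intro k
    induction k with
    | zero =>
      intro _
      refine ⟨by simp [hx0], fun i => ?_⟩
      rw [hh0, norm_zero]
      positivity
    | succ k ih =>
      intro hk
      obtain ⟨hx, hh⟩ := ih (by omega)
      have hkτ : (k:ℝ) ≤ τ := by exact_mod_cast (by omega : k ≤ τ)
      have hxk : ‖x k‖ ≤ B := by
        refine hx.trans ?_
        rw [div_le_iff₀ hτ']
        exact mul_le_mul_of_nonneg_left hkτ hB0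
      refine ⟨?_, ?_⟩
      · have hs : ‖(N : ℝ)⁻¹ • (∑ i, h i k)‖ ≤ 2 * L * B := by
          rw [norm_smul, norm_inv, Real.norm_of_nonneg hN'.le, inv_mul_le_iff₀ hN']
          refine (norm_sum_le _ _).trans ?_
          refine (Finset.sum_le_sum (fun i _ => hh i)).trans ?_
          simp
        have hgk : ‖g k‖ ≤ 6 * L * B := by
          rw [hg]
          have h1 := norm_add_le ((N : ℝ)⁻¹ • (∑ i, h i k))
            (gradient (fi (idx k)) (x k) - h (idx k) k)
          have h2 := norm_sub_le (gradient (fi (idx k)) (x k)) (h (idx k) k)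
          have h3 := hgr (idx k) _ hxk
          have h4 := hh (idx k)
          linarith
        have hα0 : 0 ≤ α := by rw [hα]; positivity
        have h5 : ‖α • g k‖ ≤ B / τ := by
          rw [norm_smul, Real.norm_of_nonneg hα0]
          refine (mul_le_mul_of_nonneg_left hgk hα0).trans ?_
          have h6 : α * (6 * L * B) = (6 / 16) * (B / τ) := by
            rw [hα]
            field_simp
          have h7 : 0 ≤ B / τ := by positivity
          rw [h6]
          linarith
        rw [hxrec]
        have h8 := norm_sub_le (x k) (α • g k)
        have h9 : B * ((k + 1 : ℕ) : ℝ) / τ = B * k / τ + B / τ := by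
          push_cast
          ring
        rw [h9]
        linarith
      · intro i
        rw [hhrec]
        split_ifs
        · exact hgr i _ hxk
        · exact hh i
  intro k hk
  have hkτ : (k:ℝ) ≤ τ := by exact_mod_cast hk
  refine (key k hk).1.trans ?_
  rw [div_le_iff₀ hτ']
  exact mul_le_mul_of_nonneg_left hkτ hB0
end

section
/- Fix an integer τ ≥ 1 and set α = 1/(16 L τ). For any sampling sequence, the SAG directions satisfy ‖g_k‖ ≤ 6 L B for every k with 0 ≤ k ≤ τ. -/
/- STATEMENT 10 (SAG bounded directions during the burn-in period). -/
theorem sag_bounded_directions (d N : ℕ) (hd : 1 ≤ d) (hN : 1 ≤ N) (L : ℝ) (hL : 0 < L)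
    (fi : Fin N → EuclideanSpace ℝ (Fin d) → ℝ)
    (hdiff : ∀ i, Differentiable ℝ (fi i))
    (hsmooth : ∀ i x y, ‖gradient (fi i) x - gradient (fi i) y‖ ≤ L * ‖x - y‖)
    (f : EuclideanSpace ℝ (Fin d) → ℝ)
    (hf : ∀ z, f z = (∑ i, fi i z) / N)
    (xstar : EuclideanSpace ℝ (Fin d)) (hmin : ∀ y, f xstar ≤ f y)
    (xistar : Fin N → EuclideanSpace ℝ (Fin d))
    (hxi : ∀ i y, fi i (xistar i) ≤ fi i y)
    (B : ℝ) (hB : B = max ‖xstar‖ (⨆ i, ‖xistar i‖))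
    (τ : ℕ) (hτ : 1 ≤ τ)
    (idx : ℕ → Fin N) (α : ℝ) (hα : α = 1 / (16 * L * τ))
    (x g : ℕ → EuclideanSpace ℝ (Fin d))
    (h : Fin N → ℕ → EuclideanSpace ℝ (Fin d))
    (hx0 : x 0 = 0)
    (hh0 : ∀ i, h i 0 = 0)
    (hhrec : ∀ i k, h i (k + 1) = if idx k = i then gradient (fi i) (x k) else h i k)
    (hg : ∀ k, g k = (N : ℝ)⁻¹ • (∑ i, h i k)
      + (N : ℝ)⁻¹ • (gradient (fi (idx k)) (x k) - h (idx k) k))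
    (hxrec : ∀ k, x (k + 1) = x k - α • g k) :
    ∀ k : ℕ, k ≤ τ → ‖g k‖ ≤ 6 * L * B := by
  have hBi : ∀ i, ‖xistar i‖ ≤ B := by
    intro i
    rw [hB]
    exact le_trans (le_ciSup (f := fun i => ‖xistar i‖) (Set.finite_range _).bddAbove i)
      (le_max_right _ _)
  have hB0 : 0 ≤ B := by
    rw [hB]
    exact le_trans (norm_nonneg _) (le_max_left _ _)
  have hNpos : (0 : ℝ) < N := by exact_mod_cast hN
  have hτpos : (0 : ℝ) < τ := by exact_mod_cast hτ
  have hα0 : 0 ≤ α := by rw [hα]; positivity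
  have hαL : α * L * τ = 1 / 16 := by rw [hα]; field_simp
  have hgrad0 : ∀ i, gradient (fi i) (xistar i) = 0 := by
    intro i
    have hm : IsLocalMin (fi i) (xistar i) := Filter.Eventually.of_forall (hxi i)
    simp [gradient, hm.fderiv_eq_zero]
  have hgrad : ∀ i y, ‖gradient (fi i) y‖ ≤ L * (‖y‖ + B) := by
    intro i y
    have h1 := hsmooth i y (xistar i)
    rw [hgrad0, sub_zero] at h1
    refine h1.trans (mul_le_mul_of_nonneg_left ?_ hL.le)
    exact (norm_sub_le _ _).trans (by linarith [hBi i])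
  have hgeq : ∀ k, g k = (N : ℝ)⁻¹ • ∑ i, h i (k + 1) := by
    intro k
    rw [hg, ← smul_add]
    congr 1
    have e : ∀ i, h i (k + 1) = h i k
        + if idx k = i then gradient (fi i) (x k) - h i k else 0 := by
      intro i
      rw [hhrec]
      split_ifs <;> simp
    rw [Finset.sum_congr rfl (fun i _ => e i), Finset.sum_add_distrib]
    simp
  have hgb : ∀ k, (∀ i, ‖h i (k + 1)‖ ≤ 6 * L * B) → ‖g k‖ ≤ 6 * L * B := by
    intro k hk
    rw [hgeq, norm_smul, norm_inv, Real.norm_natCast]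
    have h1 : ‖∑ i, h i (k + 1)‖ ≤ N * (6 * L * B) := by
      refine (norm_sum_le_of_le _ (fun i _ => hk i)).trans ?_
      simp
    rw [inv_mul_le_iff₀ hNpos]
    exact h1
  have hLB : 0 ≤ L * B := by positivity
  have step : ∀ k : ℕ, k ≤ τ → ‖x k‖ ≤ k * (α * (6 * L * B)) →
      (∀ i, ‖h i k‖ ≤ 6 * L * B) → ∀ i, ‖h i (k + 1)‖ ≤ 6 * L * B := by
    intro k hk hx hh i
    rw [hhrec]
    split_ifs
    · refine (hgrad i _).trans ?_
      have hk' : (k : ℝ) ≤ τ := by exact_mod_cast hk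
      have h2 : (k : ℝ) * (α * (6 * L * B)) ≤ τ * (α * (6 * L * B)) := by
        refine mul_le_mul_of_nonneg_right hk' ?_
        positivity
      have h3 : (τ : ℝ) * (α * (6 * L * B)) = 6 / 16 * B := by
        linear_combination 6 * B * hαL
      have h4 : ‖x k‖ ≤ B := by linarith
      have h5 := mul_le_mul_of_nonneg_left h4 hL.le
      linarith
    · exact hh i
  have inv : ∀ k : ℕ, k ≤ τ → ‖x k‖ ≤ k * (α * (6 * L * B)) ∧ ∀ i, ‖h i k‖ ≤ 6 * L * B := by
    intro k
    induction k with
    | zero =>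
      intro _
      refine ⟨by simp [hx0], fun i => ?_⟩
      rw [hh0, norm_zero]
      linarith
    | succ k ih =>
      intro hk
      obtain ⟨h1, h2⟩ := ih (by omega)
      have h3 := step k (by omega) h1 h2
      refine ⟨?_, h3⟩
      have h4 := mul_le_mul_of_nonneg_left (hgb k h3) hα0
      rw [hxrec]
      refine (norm_sub_le _ _).trans ?_
      rw [norm_smul, Real.norm_of_nonneg hα0]
      push_cast
      linarith
  intro k hk
  obtain ⟨h1, h2⟩ := inv k hk
  exact hgb k (step k hk h1 h2)
end

section
/- Fix an integer τ ≥ 1 and set α = 1/(16 L τ). For any sampling sequence, the SAGA directions satisfy ‖g_k‖ ≤ 6 L B for every k with 0 ≤ k ≤ τ. -/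
/- STATEMENT 11 (SAGA bounded directions during the burn-in period). -/
theorem saga_bounded_directions (d N : ℕ) (hd : 1 ≤ d) (hN : 1 ≤ N) (L : ℝ) (hL : 0 < L)
    (fi : Fin N → EuclideanSpace ℝ (Fin d) → ℝ)
    (hdiff : ∀ i, Differentiable ℝ (fi i))
    (hsmooth : ∀ i x y, ‖gradient (fi i) x - gradient (fi i) y‖ ≤ L * ‖x - y‖)
    (f : EuclideanSpace ℝ (Fin d) → ℝ)
    (hf : ∀ z, f z = (∑ i, fi i z) / N)
    (xstar : EuclideanSpace ℝ (Fin d)) (hmin : ∀ y, f xstar ≤ f y)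
    (xistar : Fin N → EuclideanSpace ℝ (Fin d))
    (hxi : ∀ i y, fi i (xistar i) ≤ fi i y)
    (B : ℝ) (hB : B = max ‖xstar‖ (⨆ i, ‖xistar i‖))
    (τ : ℕ) (hτ : 1 ≤ τ)
    (idx : ℕ → Fin N) (α : ℝ) (hα : α = 1 / (16 * L * τ))
    (x g : ℕ → EuclideanSpace ℝ (Fin d))
    (h : Fin N → ℕ → EuclideanSpace ℝ (Fin d))
    (hx0 : x 0 = 0)
    (hh0 : ∀ i, h i 0 = 0)
    (hhrec : ∀ i k, h i (k + 1) = if idx k = i then gradient (fi i) (x k) else h i k)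
    (hg : ∀ k, g k = (N : ℝ)⁻¹ • (∑ i, h i k)
      + (gradient (fi (idx k)) (x k) - h (idx k) k))
    (hxrec : ∀ k, x (k + 1) = x k - α • g k) :
    ∀ k : ℕ, k ≤ τ → ‖g k‖ ≤ 6 * L * B := by
  have hB0 : 0 ≤ B := by rw [hB]; exact le_max_of_le_left (norm_nonneg _)
  have hBi : ∀ i, ‖xistar i‖ ≤ B := fun i => by
    rw [hB]
    exact le_max_of_le_right (le_ciSup (f := fun i => ‖xistar i‖) (Set.finite_range _).bddAbove i)
  have hgz : ∀ i, gradient (fi i) (xistar i) = 0 := fun i => by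
    have h1 : IsLocalMin (fi i) (xistar i) := Filter.Eventually.of_forall (hxi i)
    simp [gradient, h1.fderiv_eq_zero]
  have hgr : ∀ i z, ‖gradient (fi i) z‖ ≤ L * (‖z‖ + B) := fun i z => by
    have h1 := hsmooth i z (xistar i)
    rw [hgz, sub_zero] at h1
    refine h1.trans (mul_le_mul_of_nonneg_left ?_ hL.le)
    exact (norm_sub_le _ _).trans (by linarith [hBi i])
  have hτ0 : (0 : ℝ) < τ := by exact_mod_cast hτ
  have hα0 : 0 < α := by rw [hα]; positivity
  have hαe : τ * (α * (6 * L * B)) = 3 / 8 * B := by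
    rw [hα]; field_simp; ring
  have hLB : 0 ≤ L * B := mul_nonneg hL.le hB0
  have hN0 : (0 : ℝ) < N := by exact_mod_cast hN
  have key : ∀ k ≤ τ, ‖x k‖ ≤ k * (α * (6 * L * B)) → (∀ i, ‖h i k‖ ≤ 2 * (L * B)) →
      (∀ i, ‖gradient (fi i) (x k)‖ ≤ 2 * (L * B)) ∧ ‖g k‖ ≤ 6 * L * B := by
    intro k hk hx hh
    have hkτ : (k : ℝ) ≤ τ := by exact_mod_cast hk
    have hx' : ‖x k‖ ≤ 3 / 8 * B := by
      rw [← hαe]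
      exact hx.trans (mul_le_mul_of_nonneg_right hkτ (by positivity))
    have hG : ∀ i, ‖gradient (fi i) (x k)‖ ≤ 2 * (L * B) := fun i => by
      have h1 := hgr i (x k)
      have h2 : L * (‖x k‖ + B) ≤ L * (2 * B) := mul_le_mul_of_nonneg_left (by linarith) hL.le
      linarith
    refine ⟨hG, ?_⟩
    have hs : ‖(N : ℝ)⁻¹ • (∑ i, h i k)‖ ≤ 2 * (L * B) := by
      rw [norm_smul, norm_inv, Real.norm_of_nonneg hN0.le, inv_mul_le_iff₀ hN0]
      refine (norm_sum_le _ _).trans ((Finset.sum_le_sum fun i _ => hh i).trans ?_)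
      simp
    rw [hg]
    have h1 := norm_add_le ((N : ℝ)⁻¹ • (∑ i, h i k)) (gradient (fi (idx k)) (x k) - h (idx k) k)
    have h2 := norm_sub_le (gradient (fi (idx k)) (x k)) (h (idx k) k)
    linarith [hG (idx k), hh (idx k)]
  have inv : ∀ k ≤ τ, ‖x k‖ ≤ k * (α * (6 * L * B)) ∧ (∀ i, ‖h i k‖ ≤ 2 * (L * B)) := by
    intro k
    induction k with
    | zero =>
      intro _
      refine ⟨by simp [hx0], fun i => ?_⟩
      rw [hh0, norm_zero]; linarith
    | succ k ih =>
      intro hk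
      obtain ⟨h1, h2⟩ := ih (by omega)
      obtain ⟨h3, h4⟩ := key k (by omega) h1 h2
      refine ⟨?_, fun i => ?_⟩
      · rw [hxrec]
        have h5 := norm_sub_le (x k) (α • g k)
        rw [norm_smul, Real.norm_of_nonneg hα0.le] at h5
        have h6 := mul_le_mul_of_nonneg_left h4 hα0.le
        push_cast
        linarith
      · rw [hhrec]
        split_ifs
        · exact h3 i
        · exact h2 i
  intro k hk
  exact (key k hk (inv k hk).1 (inv k hk).2).2
end

section
/- Fix an integer τ ≥ 1 and set α = 1/(16 L τ). For any sampling sequence, the SAG Lyapunov function at the end of the burn-in period satisfies V_τ ≤ 3 L B². -/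
/- STATEMENT 12 (SAG Lyapunov bound at the end of the burn-in period). -/
theorem sag_burn_in_lyapunov (d N : ℕ) (hd : 1 ≤ d) (hN : 1 ≤ N) (L : ℝ) (hL : 0 < L)
    (fi : Fin N → EuclideanSpace ℝ (Fin d) → ℝ)
    (hdiff : ∀ i, Differentiable ℝ (fi i))
    (hsmooth : ∀ i x y, ‖gradient (fi i) x - gradient (fi i) y‖ ≤ L * ‖x - y‖)
    (f : EuclideanSpace ℝ (Fin d) → ℝ)
    (hf : ∀ z, f z = (∑ i, fi i z) / N)
    (xstar : EuclideanSpace ℝ (Fin d)) (hmin : ∀ y, f xstar ≤ f y)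
    (xistar : Fin N → EuclideanSpace ℝ (Fin d))
    (hxi : ∀ i y, fi i (xistar i) ≤ fi i y)
    (B : ℝ) (hB : B = max ‖xstar‖ (⨆ i, ‖xistar i‖))
    (τ : ℕ) (hτ : 1 ≤ τ)
    (idx : ℕ → Fin N) (α : ℝ) (hα : α = 1 / (16 * L * τ))
    (x g : ℕ → EuclideanSpace ℝ (Fin d))
    (h : Fin N → ℕ → EuclideanSpace ℝ (Fin d))
    (hx0 : x 0 = 0)
    (hh0 : ∀ i, h i 0 = 0)
    (hhrec : ∀ i k, h i (k + 1) = if idx k = i then gradient (fi i) (x k) else h i k)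
    (hg : ∀ k, g k = (N : ℝ)⁻¹ • (∑ i, h i k)
      + (N : ℝ)⁻¹ • (gradient (fi (idx k)) (x k) - h (idx k) k))
    (hxrec : ∀ k, x (k + 1) = x k - α • g k) :
    f (x τ) - f xstar
      + L * α ^ 2 * ∑ j ∈ Finset.Icc 1 τ, ((τ : ℝ) - j + 1) * ‖g (τ - j)‖ ^ 2
      ≤ 3 * L * B ^ 2 := by
  have hNpos : (0:ℝ) < N := by exact_mod_cast hN
  have hτpos : (1:ℝ) ≤ τ := by exact_mod_cast hτ
  have hxs : ‖xstar‖ ≤ B := hB ▸ le_max_left _ _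
  have hxis : ∀ i, ‖xistar i‖ ≤ B := fun i =>
    (le_ciSup (Set.finite_range (fun i => ‖xistar i‖)).bddAbove i).trans (hB ▸ le_max_right _ _)
  have hB0 : 0 ≤ B := (norm_nonneg _).trans hxs
  have hgz : ∀ i, gradient (fi i) (xistar i) = 0 := by
    intro i
    have : IsLocalMin (fi i) (xistar i) := Filter.Eventually.of_forall (hxi i)
    simp [gradient, this.fderiv_eq_zero]
  have hgb : ∀ i y, ‖gradient (fi i) y‖ ≤ L * (‖y‖ + B) := by
    intro i y
    have h1 := hsmooth i y (xistar i)
    rw [hgz, sub_zero] at h1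
    refine h1.trans (mul_le_mul_of_nonneg_left ?_ hL.le)
    exact (norm_sub_le _ _).trans (by linarith [hxis i])
  have hgu : ∀ k, g k = (N : ℝ)⁻¹ • ∑ i, h i (k+1) := by
    intro k
    rw [hg, ← smul_add]
    congr 1
    have : ∀ i, h i (k+1) = h i k + if idx k = i then gradient (fi i) (x k) - h i k else 0 := by
      intro i
      rw [hhrec]
      split_ifs <;> simp
    simp [this, Finset.sum_add_distrib]
  have hgn : ∀ k C, (∀ i, ‖h i (k+1)‖ ≤ C) → ‖g k‖ ≤ C := by
    intro k C hC
    rw [hgu, norm_smul, norm_inv, Real.norm_natCast, inv_mul_le_iff₀ hNpos]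
    refine (norm_sum_le _ _).trans ((Finset.sum_le_sum fun i _ => hC i).trans ?_)
    simp
  have key1 : ∀ k, k ≤ τ → ‖x k‖ ≤ k * (B / (15 * τ)) → ‖x k‖ ≤ B / 15 := by
    intro k hk h1
    have hk' : (k:ℝ) ≤ τ := by exact_mod_cast hk
    refine h1.trans ((mul_le_mul_of_nonneg_right hk' (by positivity)).trans (le_of_eq ?_))
    field_simp
  have hstep : ∀ k, k ≤ τ → ‖x k‖ ≤ k * (B / (15 * τ)) → (∀ i, ‖h i k‖ ≤ L * (16/15 * B)) →
      ∀ i, ‖h i (k+1)‖ ≤ L * (16/15 * B) := by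
    intro k hk h1 h2 i
    rw [hhrec]
    split_ifs
    · refine (hgb i _).trans (mul_le_mul_of_nonneg_left ?_ hL.le)
      linarith [key1 k hk h1]
    · exact h2 i
  have inv : ∀ k, k ≤ τ → ‖x k‖ ≤ k * (B / (15 * τ)) ∧ ∀ i, ‖h i k‖ ≤ L * (16/15 * B) := by
    intro k
    induction k with
    | zero =>
      intro _
      refine ⟨by simp [hx0], fun i => ?_⟩
      rw [hh0, norm_zero]; positivity
    | succ k ih =>
      intro hk
      obtain ⟨h1, h2⟩ := ih (by omega)
      have h3 := hstep k (by omega) h1 h2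
      refine ⟨?_, h3⟩
      have h4 := hgn k _ h3
      have hα0 : 0 ≤ α := by rw [hα]; positivity
      have h5 : α * ‖g k‖ ≤ B / (15 * τ) := by
        refine (mul_le_mul_of_nonneg_left h4 hα0).trans (le_of_eq ?_)
        rw [hα]; field_simp
      rw [hxrec]
      refine (norm_sub_le _ _).trans ?_
      rw [norm_smul, Real.norm_of_nonneg hα0]
      push_cast
      linarith
  have hgk : ∀ k, k ≤ τ → ‖g k‖ ≤ L * (16/15 * B) := fun k hk =>
    hgn k _ (hstep k hk (inv k hk).1 (inv k hk).2)
  have hxτ := key1 τ le_rfl (inv τ le_rfl).1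
  have hfi : ∀ i, fi i (x τ) - fi i xstar ≤ 32/15 * L * B ^ 2 := by
    intro i
    have h1 := (convex_closedBall (0 : EuclideanSpace ℝ (Fin d)) B).norm_image_sub_le_of_norm_fderiv_le
      (𝕜 := ℝ) (f := fi i) (C := L * (B + B)) (x := xstar) (y := x τ)
      (fun y _ => hdiff i y) (fun y hy => by
        have h2 := hgb i y
        have h3 : ‖gradient (fi i) y‖ = ‖fderiv ℝ (fi i) y‖ := by simp [gradient]
        rw [← h3]
        refine h2.trans (mul_le_mul_of_nonneg_left ?_ hL.le)
        have := mem_closedBall_zero_iff.1 hy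
        linarith) (mem_closedBall_zero_iff.2 hxs) (mem_closedBall_zero_iff.2 (by linarith))
    have h4 : ‖x τ - xstar‖ ≤ 16/15 * B := (norm_sub_le _ _).trans (by linarith)
    have h5 := mul_le_mul_of_nonneg_left h4 (show 0 ≤ L * (B + B) by positivity)
    have h6 := (le_abs_self _).trans h1
    linarith
  have hfb : f (x τ) - f xstar ≤ 32/15 * L * B ^ 2 := by
    rw [hf, hf, ← sub_div, ← Finset.sum_sub_distrib, div_le_iff₀ hNpos]
    refine (Finset.sum_le_sum fun i _ => hfi i).trans (le_of_eq ?_)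
    simp; ring
  have hW : ∑ j ∈ Finset.Icc 1 τ, ((τ : ℝ) - j + 1) * ‖g (τ - j)‖ ^ 2
      ≤ τ * (τ * (L * (16/15 * B)) ^ 2) := by
    have : ∀ j ∈ Finset.Icc 1 τ, ((τ : ℝ) - j + 1) * ‖g (τ - j)‖ ^ 2
        ≤ τ * (L * (16/15 * B)) ^ 2 := by
      intro j hj
      have hj1 : (1:ℝ) ≤ j := by exact_mod_cast (Finset.mem_Icc.1 hj).1
      exact mul_le_mul (by linarith)
        (pow_le_pow_left₀ (norm_nonneg _) (hgk _ (Nat.sub_le _ _)) 2) (by positivity) (by positivity)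
    refine (Finset.sum_le_sum this).trans (le_of_eq ?_)
    simp
  have hW2 := mul_le_mul_of_nonneg_left hW (show 0 ≤ L * α ^ 2 by positivity)
  have hW3 : L * α ^ 2 * (τ * (τ * (L * (16/15 * B)) ^ 2)) = L * B ^ 2 / 225 := by
    rw [hα]; field_simp; ring
  have : 0 ≤ L * B ^ 2 := by positivity
  linarith
end

section
/- (SAG, strongly convex, high probability.) Suppose f is μ-strongly convex (μ > 0) with minimizer x* and κ := L/μ. Fix K ≥ 1, δ ∈ (0,1), let τ = ⌈(8N/3)·log(NK/δ)⌉, set α = 1/(16 L τ), and assume K > τ. Then, with probability at least 1 − δ over the i.i.d. uniform sampling, the SAG iterates satisfy f(x_K) − f(x*) ≤ 6 L B² · (1 − 1/(64 τ κ))^K. -/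
open scoped RealInnerProductSpace

section Aux

variable {E : Type*} [NormedAddCommGroup E] [InnerProductSpace ℝ E] [CompleteSpace E]

theorem aux_descent (f : E → ℝ) (L : ℝ) (hf : Differentiable ℝ f)
    (hs : ∀ x y, ‖gradient f x - gradient f y‖ ≤ L * ‖x - y‖) (x v : E) :
    f (x + v) ≤ f x + ⟪gradient f x, v⟫ + L / 2 * ‖v‖ ^ 2 := by
  have hd : ∀ t : ℝ, HasDerivAt
      (fun t : ℝ => f (x + t • v) - t * ⟪gradient f x, v⟫ - L / 2 * ‖v‖ ^ 2 * t ^ 2)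
      (⟪gradient f (x + t • v), v⟫ - ⟪gradient f x, v⟫ - L * ‖v‖ ^ 2 * t) t := by
    intro t
    have h1 : HasDerivAt (fun t : ℝ => x + t • v) v t := by
      simpa using ((hasDerivAt_id t).smul_const v).const_add x
    have h2 := (hf (x + t • v)).hasGradientAt.hasFDerivAt.comp_hasDerivAt t h1
    have h3 := (hasDerivAt_id t).mul_const ⟪gradient f x, v⟫
    have h4 := ((hasDerivAt_id t).pow 2).const_mul (L / 2 * ‖v‖ ^ 2)
    have h5 := (h2.sub h3).sub h4
    refine (h5.congr_deriv ?_)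
    simp
    ring
  have hanti : AntitoneOn
      (fun t : ℝ => f (x + t • v) - t * ⟪gradient f x, v⟫ - L / 2 * ‖v‖ ^ 2 * t ^ 2)
      (Set.Icc 0 1) := by
    apply antitoneOn_of_deriv_nonpos (convex_Icc 0 1)
    · exact fun t _ => (hd t).continuousAt.continuousWithinAt
    · exact fun t _ => (hd t).differentiableAt.differentiableWithinAt
    · intro t ht
      rw [interior_Icc] at ht
      rw [(hd t).deriv, ← inner_sub_left]
      have h1 := real_inner_le_norm (gradient f (x + t • v) - gradient f x) v
      have h2 := hs (x + t • v) x
      have h3 : ‖x + t • v - x‖ = t * ‖v‖ := by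
        rw [add_sub_cancel_left, norm_smul, Real.norm_of_nonneg ht.1.le]
      rw [h3] at h2
      have h4 := mul_le_mul_of_nonneg_right h2 (norm_nonneg v)
      nlinarith
  have := hanti (Set.left_mem_Icc.2 zero_le_one) (Set.right_mem_Icc.2 zero_le_one) zero_le_one
  simp only [one_smul, zero_smul, add_zero, one_mul, zero_mul, one_pow, mul_one, sub_zero,
    ne_eq, OfNat.ofNat_ne_zero, not_false_eq_true, zero_pow, mul_zero] at this
  linarith

theorem aux_grad_min (f : E → ℝ) (z : E) (hz : ∀ y, f z ≤ f y) : gradient f z = 0 := by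
  have h : IsLocalMin f z := Filter.Eventually.of_forall hz
  simp [gradient, h.fderiv_eq_zero]

theorem aux_grad_avg (N : ℕ) (fi : Fin N → E → ℝ) (hdiff : ∀ i, Differentiable ℝ (fi i))
    (f : E → ℝ) (hf : ∀ z, f z = (∑ i, fi i z) / N) (z : E) :
    HasGradientAt f ((N : ℝ)⁻¹ • ∑ i, gradient (fi i) z) z := by
  have h1 : HasFDerivAt (fun z => ∑ i, fi i z)
      (∑ i, InnerProductSpace.toDual ℝ E (gradient (fi i) z)) z :=
    HasFDerivAt.fun_sum fun i _ => (hdiff i z).hasGradientAt.hasFDerivAt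
  have h2 := h1.const_mul ((N : ℝ)⁻¹)
  rw [hasGradientAt_iff_hasFDerivAt]
  have e : f = fun z => (N : ℝ)⁻¹ * ∑ i, fi i z := by
    funext z; rw [hf, div_eq_inv_mul]
  rw [e]
  rw [map_smul, map_sum]
  exact h2

theorem aux_avg_norm (N : ℕ) (hN : 1 ≤ N) (v : Fin N → E) (C : ℝ) (hv : ∀ i, ‖v i‖ ≤ C) :
    ‖(N : ℝ)⁻¹ • ∑ i, v i‖ ≤ C := by
  have hN' : (0 : ℝ) < N := by exact_mod_cast hN
  rw [norm_smul, norm_inv, Real.norm_natCast]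
  have h1 : ‖∑ i, v i‖ ≤ N * C := by
    refine (norm_sum_le _ _).trans ((Finset.sum_le_sum fun i _ => hv i).trans ?_)
    simp
  rw [inv_mul_le_iff₀ hN']
  exact h1

/-- Lyapunov lemma. -/
theorem aux_lyap (T K : ℕ) (hT : 1 ≤ T) (a e : ℕ → ℝ) (r c q p : ℝ) (he : ∀ k, 0 ≤ e k)
    (ha : ∀ k, 0 ≤ a k)
    (hr : 0 ≤ r) (hrT : r * T ≤ 1 / 64) (hc : 0 ≤ c) (hq : q ≤ 63 / 64 * c) (hp : c * T ≤ p)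
    (hrec : ∀ k, k + T < K →
      a (k + T + 1) ≤ (1 - r) * a (k + T) - p * e (k + T) + q * ∑ j ∈ Finset.range T, e (k + j)) :
    ∀ k, k + T ≤ K → a (k + T) ≤ (1 - r) ^ k *
      (a T + c * ∑ j ∈ Finset.range T, ((j : ℝ) + 1) * e j) := by
  have hT' : (1 : ℝ) ≤ T := by exact_mod_cast hT
  have hr1 : r ≤ 1 / 64 := by nlinarith
  have key : ∀ k, k + T ≤ K →
      a (k + T) + c * ∑ j ∈ Finset.range T, ((j : ℝ) + 1) * e (k + j) ≤ (1 - r) ^ k *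
      (a T + c * ∑ j ∈ Finset.range T, ((j : ℝ) + 1) * e j) := by
    intro k
    induction k with
    | zero => intro _; simp
    | succ k ih =>
      intro hk
      have ih' := ih (by omega)
      have h1 := hrec k (by omega)
      have hW : ∑ j ∈ Finset.range T, ((j : ℝ) + 1) * e (k + 1 + j) =
          ∑ j ∈ Finset.range T, ((j : ℝ) + 1) * e (k + j) - ∑ j ∈ Finset.range T, e (k + j)
            + T * e (k + T) := by
        have s1 := Finset.sum_range_succ' (fun j : ℕ => (j : ℝ) * e (k + j)) T
        have s2 := Finset.sum_range_succ (fun j : ℕ => (j : ℝ) * e (k + j)) T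
        rw [s1] at s2
        simp only [Nat.cast_zero, zero_mul, add_zero, Nat.cast_add, Nat.cast_one] at s2
        have s3 : ∑ j ∈ Finset.range T, ((j : ℝ) + 1) * e (k + 1 + j) =
            ∑ j ∈ Finset.range T, ((j : ℝ) + 1) * e (k + (j + 1)) :=
          Finset.sum_congr rfl fun j _ => by rw [show k + 1 + j = k + (j + 1) by ring]
        rw [s3, s2, ← Finset.sum_sub_distrib]
        congr 1
        exact Finset.sum_congr rfl fun j _ => by ring
      have hWle : ∑ j ∈ Finset.range T, ((j : ℝ) + 1) * e (k + j) ≤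
          T * ∑ j ∈ Finset.range T, e (k + j) := by
        rw [Finset.mul_sum]
        refine Finset.sum_le_sum fun j hj => mul_le_mul_of_nonneg_right ?_ (he _)
        exact_mod_cast Finset.mem_range.1 hj
      have hS : 0 ≤ ∑ j ∈ Finset.range T, e (k + j) := Finset.sum_nonneg fun j _ => he _
      rw [show k + 1 + T = k + T + 1 by ring, hW, pow_succ, mul_comm _ (1 - r), mul_assoc]
      refine le_trans ?_ (mul_le_mul_of_nonneg_left ih' (by linarith : 0 ≤ 1 - r))
      set W := ∑ j ∈ Finset.range T, ((j : ℝ) + 1) * e (k + j)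
      set S := ∑ j ∈ Finset.range T, e (k + j)
      have b1 : (c * T) * e (k + T) ≤ p * e (k + T) := mul_le_mul_of_nonneg_right hp (he _)
      have b2 : q * S ≤ 63 / 64 * c * S := mul_le_mul_of_nonneg_right hq hS
      have b3 : r * (c * W) ≤ c * (1 / 64 * S) := by
        calc r * (c * W) ≤ r * (c * (T * S)) := by gcongr
          _ = c * ((r * T) * S) := by ring
          _ ≤ _ := by gcongr
      nlinarith
  intro k hk
  refine le_trans ?_ (key k hk)
  have : 0 ≤ c * ∑ j ∈ Finset.range T, ((j : ℝ) + 1) * e (k + j) :=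
    mul_nonneg hc (Finset.sum_nonneg fun j _ => mul_nonneg (by positivity) (he _))
  linarith

set_option maxHeartbeats 1000000 in
theorem aux_det (N : ℕ) (hN : 1 ≤ N)
    (L μ : ℝ) (hL : 0 < L) (hμ : 0 < μ) (hμL : μ ≤ L)
    (fi : Fin N → E → ℝ)
    (hdiff : ∀ i, Differentiable ℝ (fi i))
    (hsmooth : ∀ i x y, ‖gradient (fi i) x - gradient (fi i) y‖ ≤ L * ‖x - y‖)
    (f : E → ℝ)
    (hf : ∀ z, f z = (∑ i, fi i z) / N)
    (hsc : ∀ y z, f y + ⟪gradient f y, z - y⟫ + μ / 2 * ‖z - y‖ ^ 2 ≤ f z)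
    (xstar : E) (hmin : ∀ y, f xstar ≤ f y)
    (hdf : Differentiable ℝ f)
    (hsf : ∀ x y, ‖gradient f x - gradient f y‖ ≤ L * ‖x - y‖)
    (xistar : Fin N → E)
    (hxi : ∀ i y, fi i (xistar i) ≤ fi i y)
    (B : ℝ) (hB1 : ‖xstar‖ ≤ B) (hB2 : ∀ i, ‖xistar i‖ ≤ B)
    (K : ℕ) (τ : ℕ) (hτ : 1 ≤ τ) (α : ℝ) (hα : α = 1 / (16 * L * τ))
    (hKτ : τ < K)
    (x g : ℕ → E) (h : Fin N → ℕ → E) (ω : Fin K → Fin N)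
    (hx0 : x 0 = 0)
    (hh0 : ∀ i, h i 0 = 0)
    (hhrec : ∀ (i : Fin N) (k : ℕ) (hk : k < K),
      h i (k + 1) = if ω ⟨k, hk⟩ = i then gradient (fi i) (x k) else h i k)
    (hg : ∀ (k : ℕ) (hk : k < K),
      g k = (N : ℝ)⁻¹ • (∑ i, h i k)
        + (N : ℝ)⁻¹ • (gradient (fi (ω ⟨k, hk⟩)) (x k) - h (ω ⟨k, hk⟩) k))
    (hxrec : ∀ (k : ℕ), k < K → x (k + 1) = x k - α • g k)
    (hgood : ∀ s, s < K - τ → ∀ i, ∃ j : Fin K, s ≤ j ∧ (j : ℕ) < s + τ ∧ ω j = i) :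
    f (x K) - f xstar ≤ 6 * L * B ^ 2 * (1 - 1 / (64 * (τ : ℝ) * (L / μ))) ^ K := by
  have hT : (1 : ℝ) ≤ τ := by exact_mod_cast hτ
  have hT0 : (0 : ℝ) < τ := by linarith
  have hB0 : 0 ≤ B := (norm_nonneg _).trans hB1
  have hα0 : 0 < α := by rw [hα]; positivity
  have hαL : α * L * τ = 1 / 16 := by rw [hα]; field_simp
  -- direction is the average of the updated memory
  have hg' : ∀ k, k < K → g k = (N : ℝ)⁻¹ • ∑ i, h i (k + 1) := by
    intro k hk
    rw [hg k hk, ← smul_add]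
    congr 1
    have : ∀ i, h i (k + 1) = h i k +
        (if i = ω ⟨k, hk⟩ then gradient (fi (ω ⟨k, hk⟩)) (x k) - h (ω ⟨k, hk⟩) k else 0) := by
      intro i
      rw [hhrec i k hk]
      by_cases hi : ω ⟨k, hk⟩ = i
      · subst hi; simp
      · rw [if_neg hi, if_neg (fun hh => hi hh.symm), add_zero]
    rw [Finset.sum_congr rfl fun i _ => this i, Finset.sum_add_distrib]
    simp
  have hgr0 : ∀ i y, ‖gradient (fi i) y‖ ≤ L * (‖y‖ + B) := by
    intro i y
    have h1 := hsmooth i y (xistar i)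
    rw [aux_grad_min (fi i) (xistar i) (hxi i), sub_zero] at h1
    refine h1.trans (mul_le_mul_of_nonneg_left ?_ hL.le)
    exact (norm_sub_le _ _).trans (by linarith [hB2 i])
  -- initial phase
  have hinit : ∀ k, k ≤ K → (∀ j ≤ k, ‖x j‖ + B ≤ (1 + α * L) ^ k * B) ∧
      (∀ i, ‖h i k‖ ≤ L * ((1 + α * L) ^ k * B)) ∧
      (∀ j < k, ‖g j‖ ≤ L * ((1 + α * L) ^ k * B)) := by
    have hb : 1 ≤ 1 + α * L := by nlinarith
    intro k
    induction k with
    | zero =>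
      intro _
      refine ⟨fun j hj => ?_, fun i => ?_, fun j hj => by omega⟩
      · have : j = 0 := by omega
        subst this; simp [hx0]
      · rw [hh0]; simp; positivity
    | succ k ih =>
      intro hk
      obtain ⟨i1, i2, i3⟩ := ih (by omega)
      have hmono : (1 + α * L) ^ k * B ≤ (1 + α * L) ^ (k + 1) * B :=
        mul_le_mul_of_nonneg_right (pow_le_pow_right₀ hb (by omega)) hB0
      have hmem : ∀ i, ‖h i (k + 1)‖ ≤ L * ((1 + α * L) ^ k * B) := by
        intro i
        rw [hhrec i k (by omega)]
        split_ifs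
        · exact (hgr0 i _).trans (mul_le_mul_of_nonneg_left (i1 k le_rfl) hL.le)
        · exact i2 i
      have hgk : ‖g k‖ ≤ L * ((1 + α * L) ^ k * B) := by
        rw [hg' k (by omega)]; exact aux_avg_norm N hN _ _ hmem
      refine ⟨fun j hj => ?_, fun i => (hmem i).trans (by gcongr), fun j hj => ?_⟩
      · rcases Nat.lt_or_eq_of_le hj with hj | hj
        · exact (i1 j (by omega)).trans hmono
        · subst hj
          rw [hxrec k (by omega)]
          have n1 := norm_sub_le (x k) (α • g k)
          rw [norm_smul, Real.norm_of_nonneg hα0.le] at n1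
          have n2 := mul_le_mul_of_nonneg_left hgk hα0.le
          have n3 := i1 k le_rfl
          rw [pow_succ]
          nlinarith
      · rcases Nat.lt_or_eq_of_le (Nat.lt_succ_iff.1 hj) with hj | hj
        · exact (i3 j hj).trans (mul_le_mul_of_nonneg_left hmono hL.le)
        · subst hj; exact hgk.trans (mul_le_mul_of_nonneg_left hmono hL.le)
  have hpow2 : (1 + α * L) ^ τ ≤ 2 := by
    have h1 : 1 + α * L ≤ Real.exp (α * L) := by linarith [Real.add_one_le_exp (α * L)]
    calc (1 + α * L) ^ τ ≤ Real.exp (α * L) ^ τ := by gcongr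
      _ = Real.exp (1 / 16) := by rw [← Real.exp_nat_mul, ← hαL]; congr 1; ring
      _ ≤ Real.exp (Real.log 2) := by
          apply Real.exp_le_exp.2; linarith [Real.log_two_gt_d9]
      _ = 2 := Real.exp_log (by norm_num)
  obtain ⟨hin1, -, hin3⟩ := hinit τ hKτ.le
  have hxτ : ‖x τ‖ + B ≤ 2 * B :=
    (hin1 τ le_rfl).trans (mul_le_mul_of_nonneg_right hpow2 hB0)
  have hgτ : ∀ j < τ, ‖g j‖ ≤ L * (2 * B) := fun j hj =>
    (hin3 j hj).trans (mul_le_mul_of_nonneg_left (mul_le_mul_of_nonneg_right hpow2 hB0) hL.le)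
  have haτ : f (x τ) - f xstar ≤ 2 * L * B ^ 2 := by
    have h1 := aux_descent f L hdf hsf xstar (x τ - xstar)
    rw [aux_grad_min f xstar hmin, inner_zero_left, add_sub_cancel] at h1
    have h2 : ‖x τ - xstar‖ ≤ 2 * B := (norm_sub_le _ _).trans (by linarith)
    have h3 : ‖x τ - xstar‖ ^ 2 ≤ (2 * B) ^ 2 := by gcongr
    nlinarith
  -- memory
  have hmem : ∀ (i : Fin N) (s m : ℕ), s + m ≤ K →
      (∃ j : Fin K, s ≤ j ∧ (j : ℕ) < s + m ∧ ω j = i) →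
      ∃ j, s ≤ j ∧ j < s + m ∧ h i (s + m) = gradient (fi i) (x j) := by
    intro i s m
    induction m with
    | zero => rintro _ ⟨j, h1, h2, _⟩; omega
    | succ m ih =>
      rintro hm ⟨j, h1, h2, h3⟩
      rw [← add_assoc, hhrec i (s + m) (by omega)]
      split_ifs with hc
      · exact ⟨s + m, by omega, by omega, rfl⟩
      · have hjne : (j : ℕ) ≠ s + m := by
          intro hj
          apply hc
          rw [← h3]
          congr 1
          exact Fin.ext hj.symm
        obtain ⟨j', q1, q2, q3⟩ := ih (by omega) ⟨j, h1, by omega, h3⟩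
        exact ⟨j', q1, by omega, q3⟩
  -- movement
  have hmove : ∀ s m n, m ≤ n → s + n ≤ K →
      ‖x (s + n) - x (s + m)‖ ≤ α * ∑ j ∈ Finset.range n, ‖g (s + j)‖ := by
    intro s m n hmn
    induction n, hmn using Nat.le_induction with
    | base =>
      intro _
      simp only [sub_self, norm_zero]
      exact mul_nonneg hα0.le (Finset.sum_nonneg fun _ _ => norm_nonneg _)
    | succ n hmn ih =>
      intro hn
      have := ih (by omega)
      rw [← add_assoc, hxrec (s + n) (by omega), Finset.sum_range_succ, mul_add]
      have e : x (s + n) - α • g (s + n) - x (s + m) =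
        (x (s + n) - x (s + m)) - α • g (s + n) := by abel
      rw [e]
      refine (norm_sub_le _ _).trans ?_
      rw [norm_smul, Real.norm_of_nonneg hα0.le]
      linarith
  set r : ℝ := 1 / (64 * (τ : ℝ) * (L / μ)) with hr
  have hr0 : 0 < r := by rw [hr]; positivity
  have hrμ : α * μ = 4 * r := by rw [hr, hα]; field_simp; norm_num
  have hrT : r * τ ≤ 1 / 64 := by
    have : r * τ = 1 / 64 * (μ / L) := by rw [hr]; field_simp
    rw [this]
    have : μ / L ≤ 1 := (div_le_one hL).2 hμL
    linarith
  -- one step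
  have hstep : ∀ k, k + τ < K →
      f (x (k + τ + 1)) - f xstar ≤ (1 - r) * (f (x (k + τ)) - f xstar)
        - α / 4 * ‖g (k + τ)‖ ^ 2
        + (α / 512 / τ) * ∑ j ∈ Finset.range τ, ‖g (k + j)‖ ^ 2 := by
    intro k hk
    set G := gradient f (x (k + τ)) with hG
    set S := ∑ j ∈ Finset.range τ, ‖g (k + j)‖ with hS
    have hS0 : 0 ≤ S := Finset.sum_nonneg fun _ _ => norm_nonneg _
    have herr : ‖G - g (k + τ)‖ ≤ L * (α * S) := by
      rw [hG, (aux_grad_avg N fi hdiff f hf _).gradient, hg' _ hk, ← smul_sub,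
        ← Finset.sum_sub_distrib]
      apply aux_avg_norm N hN
      intro i
      have hex : ∃ j, k ≤ j ∧ j ≤ k + τ ∧ h i (k + τ + 1) = gradient (fi i) (x j) := by
        obtain ⟨j, a1, a2, a3⟩ := hgood k (by omega) i
        obtain ⟨j', b1, b2, b3⟩ := hmem i k (τ + 1) (by omega) ⟨j, a1, by omega, a3⟩
        exact ⟨j', b1, by omega, b3⟩
      obtain ⟨j, j1, j2, j3⟩ := hex
      rw [j3]
      refine (hsmooth i _ _).trans (mul_le_mul_of_nonneg_left ?_ hL.le)
      obtain ⟨m, rfl⟩ := Nat.exists_eq_add_of_le j1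
      exact hmove k m τ (by omega) hk.le
    have hSsq : S ^ 2 ≤ τ * ∑ j ∈ Finset.range τ, ‖g (k + j)‖ ^ 2 := by
      have := sq_sum_le_card_mul_sum_sq (s := Finset.range τ) (f := fun j => ‖g (k + j)‖)
      simpa using this
    have herr2 : ‖G - g (k + τ)‖ ^ 2 ≤
        (1 / 256 / τ) * ∑ j ∈ Finset.range τ, ‖g (k + j)‖ ^ 2 := by
      calc ‖G - g (k + τ)‖ ^ 2 ≤ (L * (α * S)) ^ 2 := by gcongr
        _ = (α * L) ^ 2 * S ^ 2 := by ring
        _ ≤ (α * L) ^ 2 * (τ * ∑ j ∈ Finset.range τ, ‖g (k + j)‖ ^ 2) := by gcongr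
        _ = _ := by
          have : α * L = 1 / 16 / τ := by rw [← hαL]; field_simp
          rw [this]; field_simp; ring
    have hd := aux_descent f L hdf hsf (x (k + τ)) (-(α • g (k + τ)))
    rw [← sub_eq_add_neg, ← hxrec _ hk, inner_neg_right, inner_smul_right, norm_neg, norm_smul,
      Real.norm_of_nonneg hα0.le, ← hG] at hd
    have hpol := norm_sub_sq_real G (g (k + τ))
    have hPL : 2 * μ * (f (x (k + τ)) - f xstar) ≤ ‖G‖ ^ 2 := by
      have h1 := hsc (x (k + τ)) xstar
      rw [← hG] at h1
      have h2 := abs_real_inner_le_norm G (xstar - x (k + τ))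
      have h3 := (abs_le.1 h2).1
      set D := ‖xstar - x (k + τ)‖
      nlinarith [sq_nonneg (‖G‖ - μ * D)]
    have hαL1 : α * L ≤ 1 / 16 := by
      have : 0 < α * L := by positivity
      nlinarith
    set e := ‖g (k + τ)‖
    set Q := ∑ j ∈ Finset.range τ, ‖g (k + j)‖ ^ 2
    set a := f (x (k + τ)) - f xstar with ha
    have ha0 : 0 ≤ a := by rw [ha]; linarith [hmin (x (k + τ))]
    have t1 : α * (2 * μ * a) ≤ α * ‖G‖ ^ 2 := mul_le_mul_of_nonneg_left hPL hα0.le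
    have t2 : α * (2 * μ * a) = 8 * r * a := by linear_combination 2 * a * hrμ
    have t3 : (α * L) * (α * e ^ 2) ≤ 1 / 16 * (α * e ^ 2) := by gcongr
    have t4 := mul_le_mul_of_nonneg_left herr2 hα0.le
    rw [hpol] at t4
    have t5 : 0 ≤ r * a := by positivity
    have t6 : 0 ≤ α * e ^ 2 := by positivity
    have t7 : α / 512 / τ * Q = α * (1 / 256 / τ * Q) / 2 := by ring
    rw [t7]
    linarith [ha]
  have hlyap := aux_lyap τ K hτ (fun k => f (x k) - f xstar) (fun k => ‖g k‖ ^ 2) r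
    (α / 4 / τ) (α / 512 / τ) (α / 4) (fun k => by positivity)
    (fun k => by linarith [hmin (x k)]) hr0.le hrT (by positivity)
    (by
      have : 0 < α / τ := by positivity
      have e1 : α / 512 / τ = 1 / 512 * (α / τ) := by ring
      have e2 : α / 4 / τ = 1 / 4 * (α / τ) := by ring
      rw [e1, e2]; linarith)
    (by field_simp; exact le_rfl) hstep (K - τ) (by omega)
  rw [Nat.sub_add_cancel hKτ.le] at hlyap
  have hsum : ∑ j ∈ Finset.range τ, ((j : ℝ) + 1) * ‖g j‖ ^ 2 ≤
      τ * (τ * (L * (2 * B)) ^ 2) := by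
    have : ∀ j ∈ Finset.range τ, ((j : ℝ) + 1) * ‖g j‖ ^ 2 ≤ τ * (L * (2 * B)) ^ 2 := by
      intro j hj
      have hj' := Finset.mem_range.1 hj
      have h1 := hgτ j hj'
      have h2 : (j : ℝ) + 1 ≤ τ := by exact_mod_cast hj'
      gcongr
    refine (Finset.sum_le_sum this).trans ?_
    simp
  have hV : (f (x τ) - f xstar) + α / 4 / τ * ∑ j ∈ Finset.range τ, ((j : ℝ) + 1) * ‖g j‖ ^ 2
      ≤ 3 * L * B ^ 2 := by
    have h1 : α / 4 / τ * ∑ j ∈ Finset.range τ, ((j : ℝ) + 1) * ‖g j‖ ^ 2 ≤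
        α / 4 / τ * (τ * (τ * (L * (2 * B)) ^ 2)) :=
      mul_le_mul_of_nonneg_left hsum (by positivity)
    have h2 : α / 4 / τ * (τ * (τ * (L * (2 * B)) ^ 2)) = (α * L * τ) * (L * B ^ 2) := by
      field_simp; ring
    rw [h2, hαL] at h1
    have : 0 ≤ L * B ^ 2 := by positivity
    linarith
  have hr1 : r ≤ 1 / 64 := by nlinarith
  have hbern : 63 / 64 ≤ (1 - r) ^ τ := by
    have := one_add_mul_le_pow (a := -r) (by linarith) τ
    rw [← sub_eq_add_neg] at this
    linarith
  have hp0 : 0 ≤ (1 - r) ^ (K - τ) := pow_nonneg (by linarith) _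
  calc f (x K) - f xstar ≤ (1 - r) ^ (K - τ) * (3 * L * B ^ 2) :=
        hlyap.trans (mul_le_mul_of_nonneg_left hV hp0)
    _ ≤ (1 - r) ^ (K - τ) * ((6 * L * B ^ 2) * (1 - r) ^ τ) := by
        refine mul_le_mul_of_nonneg_left ?_ hp0
        have : 0 ≤ L * B ^ 2 := by positivity
        nlinarith
    _ = 6 * L * B ^ 2 * (1 - r) ^ K := by
        have hpw : (1 - r) ^ K = (1 - r) ^ (K - τ) * (1 - r) ^ τ := by
          rw [← pow_add, Nat.sub_add_cancel hKτ.le]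
        rw [hpw]; ring

open Classical in
theorem aux_bad (N K τ s : ℕ) (hN : 1 ≤ N) (hs : s + τ ≤ K) (i : Fin N) :
    ((Finset.univ.filter (fun ω : Fin K → Fin N =>
      ∀ j : Fin K, s ≤ j → (j : ℕ) < s + τ → ω j ≠ i)).card : ℝ)
      = (1 - 1 / (N : ℝ)) ^ τ * (N : ℝ) ^ K := by
  have hN' : (0 : ℝ) < N := by exact_mod_cast hN
  have e : (Finset.univ.filter (fun ω : Fin K → Fin N =>
      ∀ j : Fin K, s ≤ j → (j : ℕ) < s + τ → ω j ≠ i)) =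
      Fintype.piFinset (fun j : Fin K => if s ≤ (j : ℕ) ∧ (j : ℕ) < s + τ
        then Finset.univ.erase i else Finset.univ) := by
    ext ω
    simp only [Finset.mem_filter, Finset.mem_univ, true_and, Fintype.mem_piFinset]
    refine forall_congr' fun j => ?_
    split_ifs with hj
    · simp [hj.1, hj.2]
    · simp only [Finset.mem_univ, iff_true]
      exact fun a b => absurd ⟨a, b⟩ hj
  rw [e, Fintype.card_piFinset, Nat.cast_prod]
  have e2 : ∀ j : Fin K, (((if s ≤ (j : ℕ) ∧ (j : ℕ) < s + τ
        then Finset.univ.erase i else Finset.univ : Finset (Fin N)).card : ℕ) : ℝ) =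
      (if s ≤ (j : ℕ) ∧ (j : ℕ) < s + τ then (1 - 1 / (N : ℝ)) else 1) * N := by
    intro j
    split_ifs
    · rw [Finset.card_erase_of_mem (Finset.mem_univ _), Finset.card_univ, Fintype.card_fin,
        Nat.cast_sub hN]
      field_simp; simp
    · simp
  rw [Finset.prod_congr rfl fun j _ => e2 j, Finset.prod_mul_distrib, Finset.prod_const,
    Finset.card_univ, Fintype.card_fin, Finset.prod_ite, Finset.prod_const, Finset.prod_const_one,
    mul_one]
  congr 2
  have : (Finset.univ.filter (fun j : Fin K => s ≤ (j : ℕ) ∧ (j : ℕ) < s + τ)).card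
      = (Finset.Ico s (s + τ)).card := by
    rw [← Finset.card_map Fin.valEmbedding]
    congr 1
    ext j
    simp only [Finset.mem_map, Finset.mem_filter, Finset.mem_univ, true_and, Finset.mem_Ico,
      Fin.valEmbedding_apply]
    constructor
    · rintro ⟨a, ha, rfl⟩; exact ha
    · intro hj; exact ⟨⟨j, by omega⟩, hj, rfl⟩
  rw [this]; simp

end Aux

/- STATEMENT 14 (SAG, strongly convex case, high probability).
The i.i.d. uniform sampling sequence is modeled as `ω : Fin K → Fin N`, uniformly
distributed, so the probability of an event is its cardinality divided by `N ^ K`.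
The trajectory `x ω`, direction `g ω`, and memory `h ω` are driven by the sample `ω`. -/
open Classical in
theorem sag_strongly_convex_high_prob (d N : ℕ) (hd : 1 ≤ d) (hN : 1 ≤ N)
    (L μ : ℝ) (hL : 0 < L) (hμ : 0 < μ)
    (fi : Fin N → EuclideanSpace ℝ (Fin d) → ℝ)
    (hdiff : ∀ i, Differentiable ℝ (fi i))
    (hsmooth : ∀ i x y, ‖gradient (fi i) x - gradient (fi i) y‖ ≤ L * ‖x - y‖)
    (f : EuclideanSpace ℝ (Fin d) → ℝ)
    (hf : ∀ z, f z = (∑ i, fi i z) / N)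
    (hsc : ∀ y z, f y + ⟪gradient f y, z - y⟫ + μ / 2 * ‖z - y‖ ^ 2 ≤ f z)
    (xstar : EuclideanSpace ℝ (Fin d)) (hmin : ∀ y, f xstar ≤ f y)
    (xistar : Fin N → EuclideanSpace ℝ (Fin d))
    (hxi : ∀ i y, fi i (xistar i) ≤ fi i y)
    (B : ℝ) (hB : B = max ‖xstar‖ (⨆ i, ‖xistar i‖))
    (κ : ℝ) (hκ : κ = L / μ)
    (K : ℕ) (hK1 : 1 ≤ K) (δ : ℝ) (hδ0 : 0 < δ) (hδ1 : δ < 1)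
    (τ : ℕ) (hτ : τ = ⌈(8 * (N : ℝ) / 3) * Real.log ((N : ℝ) * K / δ)⌉₊)
    (α : ℝ) (hα : α = 1 / (16 * L * τ))
    (hKτ : τ < K)
    (x g : (Fin K → Fin N) → ℕ → EuclideanSpace ℝ (Fin d))
    (h : (Fin K → Fin N) → Fin N → ℕ → EuclideanSpace ℝ (Fin d))
    (hx0 : ∀ ω, x ω 0 = 0)
    (hh0 : ∀ ω i, h ω i 0 = 0)
    (hhrec : ∀ ω (i : Fin N) (k : ℕ) (hk : k < K),
      h ω i (k + 1) = if ω ⟨k, hk⟩ = i then gradient (fi i) (x ω k) else h ω i k)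
    (hg : ∀ ω (k : ℕ) (hk : k < K),
      g ω k = (N : ℝ)⁻¹ • (∑ i, h ω i k)
        + (N : ℝ)⁻¹ • (gradient (fi (ω ⟨k, hk⟩)) (x ω k) - h ω (ω ⟨k, hk⟩) k))
    (hxrec : ∀ ω (k : ℕ), k < K → x ω (k + 1) = x ω k - α • g ω k) :
    1 - δ ≤
      (Finset.univ.filter (fun ω : Fin K → Fin N =>
          f (x ω K) - f xstar ≤
            6 * L * B ^ 2 * (1 - 1 / (64 * (τ : ℝ) * κ)) ^ K)).card / (N : ℝ) ^ K := by
  have hN' : (0 : ℝ) < N := by exact_mod_cast hN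
  have hK' : (0 : ℝ) < K := by exact_mod_cast hK1
  have hN1 : (1 : ℝ) ≤ N := by exact_mod_cast hN
  have hK1' : (1 : ℝ) ≤ K := by exact_mod_cast hK1
  haveI : Nonempty (Fin d) := ⟨⟨0, hd⟩⟩
  have hratio : 1 < (N : ℝ) * K / δ := by
    rw [lt_div_iff₀ hδ0]; nlinarith
  have hlog : 0 < Real.log ((N : ℝ) * K / δ) := Real.log_pos hratio
  have hτle : (8 * (N : ℝ) / 3) * Real.log ((N : ℝ) * K / δ) ≤ τ := by
    rw [hτ]; exact Nat.le_ceil _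
  have hτpos : 1 ≤ τ := by
    have : (0 : ℝ) < τ := lt_of_lt_of_le (by positivity) hτle
    exact_mod_cast this
  have hgrad := aux_grad_avg N fi hdiff f hf
  have hdf : Differentiable ℝ f := fun z => (hgrad z).differentiableAt
  have hsf : ∀ x y, ‖gradient f x - gradient f y‖ ≤ L * ‖x - y‖ := by
    intro x y
    rw [(hgrad x).gradient, (hgrad y).gradient, ← smul_sub, ← Finset.sum_sub_distrib]
    exact aux_avg_norm N hN _ _ fun i => hsmooth i x y
  have hμL : μ ≤ L := by
    obtain ⟨v, hv⟩ := exists_ne (0 : EuclideanSpace ℝ (Fin d))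
    have h1 := aux_descent f L hdf hsf xstar v
    have h2 := hsc xstar (xstar + v)
    rw [add_sub_cancel_left] at h2
    have h3 : 0 < ‖v‖ ^ 2 := by have := norm_pos_iff.2 hv; positivity
    nlinarith
  have hB1 : ‖xstar‖ ≤ B := by rw [hB]; exact le_max_left _ _
  have hB2 : ∀ i, ‖xistar i‖ ≤ B := by
    intro i
    rw [hB]
    exact (le_ciSup (f := fun i => ‖xistar i‖) (Set.finite_range _).bddAbove i).trans
      (le_max_right _ _)
  set good := Finset.univ.filter (fun ω : Fin K → Fin N =>
          f (x ω K) - f xstar ≤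
            6 * L * B ^ 2 * (1 - 1 / (64 * (τ : ℝ) * κ)) ^ K) with hgood
  set bad : ℕ × Fin N → Finset (Fin K → Fin N) := fun p =>
    Finset.univ.filter (fun ω : Fin K → Fin N =>
      ∀ j : Fin K, p.1 ≤ j → (j : ℕ) < p.1 + τ → ω j ≠ p.2) with hbad
  set P : Finset (ℕ × Fin N) := Finset.range (K - τ) ×ˢ Finset.univ with hP
  have hcover : (Finset.univ : Finset (Fin K → Fin N)) ⊆ good ∪ P.biUnion bad := by
    intro ω _
    by_cases hω : ω ∈ P.biUnion bad
    · exact Finset.mem_union_right _ hω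
    · apply Finset.mem_union_left
      rw [hgood, Finset.mem_filter]
      refine ⟨Finset.mem_univ _, ?_⟩
      rw [hκ]
      refine aux_det N hN L μ hL hμ hμL fi hdiff hsmooth f hf hsc xstar hmin hdf hsf xistar hxi
        B hB1 hB2 K τ hτpos α hα hKτ (x ω) (g ω) (h ω) ω (hx0 ω) (hh0 ω) (hhrec ω) (hg ω)
        (hxrec ω) ?_
      intro s hs i
      by_contra hcon
      apply hω
      rw [Finset.mem_biUnion]
      refine ⟨(s, i), by simp [hP, hs], ?_⟩
      rw [hbad, Finset.mem_filter]
      exact ⟨Finset.mem_univ _, fun j j1 j2 j3 => hcon ⟨j, j1, j2, j3⟩⟩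
  have hcard : (N : ℝ) ^ K ≤ good.card + ∑ p ∈ P, ((bad p).card : ℝ) := by
    have h1 := (Finset.card_le_card hcover).trans
      ((Finset.card_union_le _ _).trans (Nat.add_le_add_left Finset.card_biUnion_le _))
    rw [Finset.card_univ, Fintype.card_fun, Fintype.card_fin, Fintype.card_fin] at h1
    exact_mod_cast h1
  have hprob : (1 - 1 / (N : ℝ)) ^ τ ≤ δ / (N * K) := by
    have h0 : 0 ≤ 1 - 1 / (N : ℝ) := by
      have : 1 / (N : ℝ) ≤ 1 := (div_le_one hN').2 hN1
      linarith
    have h1 : 1 - 1 / (N : ℝ) ≤ Real.exp (-(1 / N)) := by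
      linarith [Real.add_one_le_exp (-(1 / (N : ℝ)))]
    calc (1 - 1 / (N : ℝ)) ^ τ ≤ Real.exp (-(1 / N)) ^ τ := by gcongr
      _ = Real.exp (-(τ / N)) := by rw [← Real.exp_nat_mul]; congr 1; ring
      _ ≤ Real.exp (-Real.log ((N : ℝ) * K / δ)) := by
          apply Real.exp_le_exp.2
          have : Real.log ((N : ℝ) * K / δ) ≤ τ / N := by
            rw [le_div_iff₀ hN']
            have : 0 < N * Real.log ((N : ℝ) * K / δ) := by positivity
            nlinarith
          linarith
      _ = δ / (N * K) := by
          rw [Real.exp_neg, Real.exp_log (by positivity), inv_div]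
  have hsumbad : ∑ p ∈ P, ((bad p).card : ℝ) ≤ δ * (N : ℝ) ^ K := by
    have hb : ∀ p ∈ P, ((bad p).card : ℝ) ≤ δ / (N * K) * (N : ℝ) ^ K := by
      intro p hp
      have hp1 : p.1 < K - τ := by
        rw [hP, Finset.mem_product] at hp
        exact Finset.mem_range.1 hp.1
      have := aux_bad N K τ p.1 hN (by omega) p.2
      simp only [hbad]
      rw [this]
      gcongr
    refine (Finset.sum_le_sum hb).trans ?_
    rw [Finset.sum_const, nsmul_eq_mul]
    have hPc : (P.card : ℝ) ≤ N * K := by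
      have : P.card ≤ N * K := by
        rw [hP, Finset.card_product, Finset.card_range, Finset.card_univ, Fintype.card_fin,
          mul_comm]
        exact Nat.mul_le_mul_left _ (Nat.sub_le _ _)
      exact_mod_cast this
    calc (P.card : ℝ) * (δ / (N * K) * (N : ℝ) ^ K) ≤ (N * K) * (δ / (N * K) * (N : ℝ) ^ K) := by
          gcongr
      _ = δ * (N : ℝ) ^ K := by field_simp
  rw [le_div_iff₀ (by positivity)]
  linarith
end

section
/- (Non-convex one-step Lyapunov descent.) Fix integers τ ≥ 1 and K > τ + 1, and set α = 1/(16 L τ). If the sampling sequence has staleness bounded by τ up to horizon K, then, without any convexity assumption on f, the SAG Lyapunov function satisfies V_{k+1} ≤ V_k − (α/8)·‖∇f(x_k)‖² for every k with τ ≤ k ≤ K−2. -/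
theorem sag_descent_aux {E : Type*} [NormedAddCommGroup E] [InnerProductSpace ℝ E] [CompleteSpace E]
    (F : E → ℝ) (G : E → E) (L : ℝ) (hG : ∀ x, HasGradientAt F (G x) x)
    (hL : ∀ x y, ‖G x - G y‖ ≤ L * ‖x - y‖) (x v : E) :
    F (x + v) ≤ F x + inner ℝ (G x) v + L / 2 * ‖v‖ ^ 2 := by
  have hline : ∀ t : ℝ, HasDerivAt (fun t : ℝ => x + t • v) v t := by
    intro t
    simpa using ((hasDerivAt_id t).smul_const v).const_add x
  have hd : ∀ t : ℝ, HasDerivAt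
      (fun t : ℝ => F (x + t • v) - t * inner ℝ (G x) v - L / 2 * ‖v‖ ^ 2 * t ^ 2)
      (inner ℝ (G (x + t • v)) v - inner ℝ (G x) v - L * ‖v‖ ^ 2 * t) t := by
    intro t
    have h1 : HasDerivAt (fun t : ℝ => F (x + t • v)) (inner ℝ (G (x + t • v)) v) t := by
      have := (hG (x + t • v)).hasFDerivAt.comp_hasDerivAt t (hline t)
      rw [InnerProductSpace.toDual_apply_apply] at this
      exact this
    have h2 : HasDerivAt (fun t : ℝ => t * inner ℝ (G x) v) (inner ℝ (G x) v) t := by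
      simpa using (hasDerivAt_id t).mul_const (inner ℝ (G x) v)
    have h3 : HasDerivAt (fun t : ℝ => L / 2 * ‖v‖ ^ 2 * t ^ 2) (L * ‖v‖ ^ 2 * t) t := by
      have := (hasDerivAt_pow 2 t).const_mul (L / 2 * ‖v‖ ^ 2)
      have e : L / 2 * ‖v‖ ^ 2 * (((2 : ℕ) : ℝ) * t ^ (2 - 1)) = L * ‖v‖ ^ 2 * t := by
        norm_num
        ring
      rw [e] at this
      exact this
    exact (h1.sub h2).sub h3
  have hanti : AntitoneOn
      (fun t : ℝ => F (x + t • v) - t * inner ℝ (G x) v - L / 2 * ‖v‖ ^ 2 * t ^ 2)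
      (Set.Icc 0 1) := by
    apply antitoneOn_of_deriv_nonpos (convex_Icc 0 1)
    · exact fun t _ => (hd t).continuousAt.continuousWithinAt
    · exact fun t _ => (hd t).differentiableAt.differentiableWithinAt
    · intro t ht
      rw [interior_Icc] at ht
      rw [(hd t).deriv, ← inner_sub_left]
      have h1 := real_inner_le_norm (G (x + t • v) - G x) v
      have h2 := hL (x + t • v) x
      rw [add_sub_cancel_left, norm_smul, Real.norm_of_nonneg ht.1.le] at h2
      have h3 := mul_le_mul_of_nonneg_right h2 (norm_nonneg v)
      nlinarith
  have := hanti (Set.left_mem_Icc.2 zero_le_one) (Set.right_mem_Icc.2 zero_le_one) zero_le_one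
  simp at this
  linarith

theorem sag_window_aux (a : ℕ → ℝ) (k τ : ℕ) :
    ∑ j ∈ Finset.Icc 1 τ, ((τ : ℝ) - j + 1) * a (k + 1 - j)
      = τ * a k + ∑ j ∈ Finset.Icc 1 τ, ((τ : ℝ) - j + 1) * a (k - j)
        - ∑ j ∈ Finset.Icc 1 τ, a (k - j) := by
  have e : ∀ F : ℕ → ℝ, ∑ j ∈ Finset.Icc 1 τ, F j = ∑ j ∈ Finset.range τ, F (j + 1) := by
    intro F
    rw [Finset.range_eq_Ico, Finset.sum_Ico_add' F 0 τ 1]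
    rfl
  rw [add_sub_assoc, ← Finset.sum_sub_distrib, e, e]
  have h1 := Finset.sum_range_succ (fun j : ℕ => ((τ : ℝ) - j) * a (k - j)) τ
  have h2 := Finset.sum_range_succ' (fun j : ℕ => ((τ : ℝ) - j) * a (k - j)) τ
  have h3 : ∑ j ∈ Finset.range τ, ((τ : ℝ) - ((j + 1 : ℕ) : ℝ) + 1) * a (k + 1 - (j + 1))
      = ∑ j ∈ Finset.range τ, ((τ : ℝ) - j) * a (k - j) := by
    refine Finset.sum_congr rfl fun j _ => ?_
    rw [Nat.add_sub_add_right]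
    push_cast
    ring
  have h4 : ∑ j ∈ Finset.range τ, (((τ : ℝ) - ((j + 1 : ℕ) : ℝ) + 1) * a (k - (j + 1))
        - a (k - (j + 1)))
      = ∑ j ∈ Finset.range τ, ((τ : ℝ) - ((j + 1 : ℕ) : ℝ)) * a (k - (j + 1)) := by
    refine Finset.sum_congr rfl fun j _ => ?_
    ring
  rw [h3, h4]
  simp only [sub_self, zero_mul, add_zero, Nat.cast_zero, sub_zero, Nat.sub_zero] at h1 h2
  linarith


theorem sag_arith_aux (L α τ A P D Q W F0 F1 Fs : ℝ) (hL : 0 < L) (hα0 : 0 < α)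
    (hLατ : L * α * τ = 1 / 16) (hLα : L * α ≤ 1 / 16) (hA0 : 0 ≤ A) (hD : 0 ≤ D) (hQ : 0 ≤ Q)
    (herr2 : D - 2 * P + Q ≤ L ^ 2 * α ^ 2 * (τ * A))
    (hdesc : F1 ≤ F0 + -(α * P) + L / 2 * (α ^ 2 * Q)) :
    F1 - Fs + L * α ^ 2 * (τ * Q + W - A) ≤ F0 - Fs + L * α ^ 2 * W - α / 8 * D := by
  have e1 := mul_le_mul_of_nonneg_left herr2 hα0.le
  have e2 : α * (L ^ 2 * α ^ 2 * (τ * A)) = 1 / 16 * (L * α ^ 2 * A) := by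
    rw [← hLατ]; ring
  have e3 : L * α ^ 2 * (τ * Q) = 1 / 16 * (α * Q) := by rw [← hLατ]; ring
  have e4 : L * α ^ 2 * Q ≤ 1 / 16 * (α * Q) := by
    have := mul_le_mul_of_nonneg_right hLα (mul_nonneg hα0.le hQ)
    linarith
  have e5 : 0 ≤ L * α ^ 2 * A := by positivity
  have e6 : 0 ≤ α * Q := by positivity
  have e7 : 0 ≤ α * D := by positivity
  rw [e2] at e1
  have e8 : L * α ^ 2 * (τ * Q + W - A) = L * α ^ 2 * (τ * Q) + L * α ^ 2 * W - L * α ^ 2 * A := by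
    ring
  rw [e8, e3]
  linarith

/- STATEMENT 16 (SAG non-convex one-step Lyapunov descent). -/
theorem sag_nonconvex_descent (d N : ℕ) (hd : 1 ≤ d) (hN : 1 ≤ N)
    (L : ℝ) (hL : 0 < L)
    (fi : Fin N → EuclideanSpace ℝ (Fin d) → ℝ)
    (hdiff : ∀ i, Differentiable ℝ (fi i))
    (hsmooth : ∀ i x y, ‖gradient (fi i) x - gradient (fi i) y‖ ≤ L * ‖x - y‖)
    (f : EuclideanSpace ℝ (Fin d) → ℝ)
    (hf : ∀ z, f z = (∑ i, fi i z) / N)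
    (xstar : EuclideanSpace ℝ (Fin d)) (hmin : ∀ y, f xstar ≤ f y)
    (τ K : ℕ) (hτ : 1 ≤ τ) (hK : τ + 1 < K)
    (idx : ℕ → Fin N) (α : ℝ) (hα : α = 1 / (16 * L * τ))
    (x g : ℕ → EuclideanSpace ℝ (Fin d))
    (h : Fin N → ℕ → EuclideanSpace ℝ (Fin d))
    (hx0 : x 0 = 0)
    (hh0 : ∀ i, h i 0 = 0)
    (hhrec : ∀ i k, h i (k + 1) = if idx k = i then gradient (fi i) (x k) else h i k)
    (hg : ∀ k, g k = (N : ℝ)⁻¹ • (∑ i, h i k)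
      + (N : ℝ)⁻¹ • (gradient (fi (idx k)) (x k) - h (idx k) k))
    (hxrec : ∀ k, x (k + 1) = x k - α • g k)
    (hstale : ∀ i : Fin N, ∀ k : ℕ, τ ≤ k → k ≤ K - 1 →
      ∃ j : ℕ, k - τ ≤ j ∧ j < k ∧ idx j = i)
    (V : ℕ → ℝ)
    (hV : ∀ k, V k = f (x k) - f xstar
      + L * α ^ 2 * ∑ j ∈ Finset.Icc 1 τ, ((τ : ℝ) - j + 1) * ‖g (k - j)‖ ^ 2) :
    ∀ k : ℕ, τ ≤ k → k ≤ K - 2 →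
      V (k + 1) ≤ V k - (α / 8) * ‖gradient f (x k)‖ ^ 2 := by

  intro k hk1 hk2
  have hNpos : (0 : ℝ) < N := by exact_mod_cast hN
  have hτ1 : (1 : ℝ) ≤ τ := by exact_mod_cast hτ
  have hα0 : 0 < α := by rw [hα]; positivity
  have hLατ : L * α * τ = 1 / 16 := by rw [hα]; field_simp
  have hLα : L * α ≤ 1 / 16 := by nlinarith [mul_pos hL hα0]
  -- gradient of the average
  have hgrad : ∀ z, HasGradientAt f ((N : ℝ)⁻¹ • ∑ i, gradient (fi i) z) z := by
    intro z
    have h1 : HasFDerivAt (fun z => ∑ i, fi i z)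
        (∑ i, (InnerProductSpace.toDual ℝ _ (gradient (fi i) z))) z :=
      HasFDerivAt.fun_sum fun i _ => ((hdiff i z).hasGradientAt).hasFDerivAt
    have h2 := h1.const_mul (N : ℝ)⁻¹
    have h3 : f = fun z => (N : ℝ)⁻¹ * ∑ i, fi i z := by
      funext z; rw [hf, div_eq_inv_mul]
    rw [hasGradientAt_iff_hasFDerivAt, h3]
    have e : InnerProductSpace.toDual ℝ _ ((N : ℝ)⁻¹ • ∑ i, gradient (fi i) z)
        = (N : ℝ)⁻¹ • ∑ i, (InnerProductSpace.toDual ℝ _ (gradient (fi i) z)) := by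
      rw [← map_sum, map_smulₛₗ]
      simp
    rw [e]
    exact h2
  have hgradeq : ∀ z, gradient f z = (N : ℝ)⁻¹ • ∑ i, gradient (fi i) z :=
    fun z => (hgrad z).gradient
  have havg : ∀ (w : Fin N → EuclideanSpace ℝ (Fin d)) (B : ℝ), (∀ i, ‖w i‖ ≤ B) →
      ‖(N : ℝ)⁻¹ • ∑ i, w i‖ ≤ B := by
    intro w B hw
    rw [norm_smul, norm_inv, Real.norm_of_nonneg hNpos.le, inv_mul_le_iff₀ hNpos]
    calc ‖∑ i, w i‖ ≤ ∑ i, ‖w i‖ := norm_sum_le _ _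
      _ ≤ ∑ _i : Fin N, B := Finset.sum_le_sum fun i _ => hw i
      _ = N * B := by simp
  have hlip : ∀ y z, ‖(N : ℝ)⁻¹ • ∑ i, gradient (fi i) y - (N : ℝ)⁻¹ • ∑ i, gradient (fi i) z‖
      ≤ L * ‖y - z‖ := by
    intro y z
    rw [← smul_sub, ← Finset.sum_sub_distrib]
    exact havg _ _ fun i => hsmooth i y z
  -- direction as the average of the updated table
  have hg' : g k = (N : ℝ)⁻¹ • ∑ i, h i (k + 1) := by
    rw [hg, ← smul_add]
    congr 1
    have : ∀ i, h i (k + 1) = h i k +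
        if idx k = i then gradient (fi i) (x k) - h i k else 0 := by
      intro i
      rw [hhrec]
      split_ifs <;> simp
    rw [Finset.sum_congr rfl fun i _ => this i, Finset.sum_add_distrib]
    simp
  -- stored gradients are recent
  have hrec : ∀ i, ∀ n j, j < n → idx j = i →
      ∃ m, j ≤ m ∧ m < n ∧ h i n = gradient (fi i) (x m) := by
    intro i n
    induction n with
    | zero => intro j hj; omega
    | succ n ih =>
      intro j hj hij
      by_cases hn : idx n = i
      · exact ⟨n, by omega, by omega, by rw [hhrec, if_pos hn]⟩
      · have hjn : j ≠ n := by rintro rfl; exact hn hij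
        obtain ⟨m, h1, h2, h3⟩ := ih j (by omega) hij
        exact ⟨m, h1, by omega, by rw [hhrec, if_neg hn, h3]⟩
  have hdist : ∀ s, s ≤ k → ‖x k - x (k - s)‖ ≤ α * ∑ j ∈ Finset.Icc 1 s, ‖g (k - j)‖ := by
    intro s
    induction s with
    | zero => intro _; simp
    | succ s ih =>
      intro hs
      have h1 := ih (by omega)
      have h2 := hxrec (k - (s + 1))
      rw [show k - (s + 1) + 1 = k - s by omega] at h2
      rw [Finset.sum_Icc_succ_top (by omega), mul_add]
      have h3 : x k - x (k - (s + 1)) = (x k - x (k - s)) + -(α • g (k - (s + 1))) := by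
        rw [h2]; abel
      rw [h3]
      refine (norm_add_le _ _).trans ?_
      rw [norm_neg, norm_smul, Real.norm_of_nonneg hα0.le]
      linarith
  set S := ∑ j ∈ Finset.Icc 1 τ, ‖g (k - j)‖ with hS
  set A := ∑ j ∈ Finset.Icc 1 τ, ‖g (k - j)‖ ^ 2 with hA
  have hSA : S ^ 2 ≤ τ * A := by
    have := sq_sum_le_card_mul_sum_sq (s := Finset.Icc 1 τ) (f := fun j => ‖g (k - j)‖)
    simpa using this
  have hA0 : 0 ≤ A := Finset.sum_nonneg fun _ _ => by positivity
  have herr : ‖gradient f (x k) - g k‖ ≤ L * (α * S) := by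
    rw [hgradeq, hg', ← smul_sub, ← Finset.sum_sub_distrib]
    refine havg _ _ fun i => ?_
    obtain ⟨j, hj1, hj2, hj3⟩ := hstale i (k + 1) (by omega) (by omega)
    obtain ⟨m, hm1, hm2, hm3⟩ := hrec i (k + 1) j hj2 hj3
    rw [hm3]
    refine (hsmooth i _ _).trans ?_
    have h1 := hdist (k - m) (by omega)
    rw [show k - (k - m) = m by omega] at h1
    refine mul_le_mul_of_nonneg_left (h1.trans ?_) hL.le
    refine mul_le_mul_of_nonneg_left ?_ hα0.le
    refine Finset.sum_le_sum_of_subset_of_nonneg ?_ fun _ _ _ => norm_nonneg _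
    exact Finset.Icc_subset_Icc_right (by omega)
  have herr2 : ‖gradient f (x k) - g k‖ ^ 2 ≤ L ^ 2 * α ^ 2 * (τ * A) := by
    calc ‖gradient f (x k) - g k‖ ^ 2 ≤ (L * (α * S)) ^ 2 :=
          pow_le_pow_left₀ (norm_nonneg _) herr 2
      _ = L ^ 2 * α ^ 2 * S ^ 2 := by ring
      _ ≤ _ := mul_le_mul_of_nonneg_left hSA (by positivity)
  rw [norm_sub_sq_real] at herr2
  have hdesc := sag_descent_aux f _ L hgrad hlip (x k) (-(α • g k))
  rw [← sub_eq_add_neg, ← hxrec, ← hgradeq, inner_neg_right, inner_smul_right, norm_neg,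
    norm_smul, Real.norm_of_nonneg hα0.le] at hdesc
  have hwin := sag_window_aux (fun n => ‖g n‖ ^ 2) k τ
  rw [hV, hV, hwin, ← hA]
  rw [mul_pow] at hdesc
  exact sag_arith_aux L α τ A _ _ _ _ _ _ _ hL hα0 hLατ hLα hA0 (by positivity) (by positivity)
    herr2 hdesc
end
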